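/- For all integers 0 < d < n and every M < +∞, there exist ε > 0 (depending only on n, d) and C ≥ 1 (depending only on n, d, M) with the following property. Let E ⊆ B(0,1) ⊆ ℝ^n be a closed set containing the origin, and suppose that for every x ∈ E and 0 < r ≤ 10 there is a d-dimensional affine plane P(x,r) containing x such that: dist(y,P(x,r)) ≤ εr for all y ∈ E ∩ B(x,r); d_{x,10^{-k}}(P(x,10^{-k}), P(x,10^{-k+1})) ≤ ε for all x ∈ E and k ≥ 0; and d_{x,10^{-k+2}}(P(x,10^{-k}), P(y,10^{-k})) ≤ ε whenever k ≥ 0 and x, y ∈ E satisfy |x−y| ≤ 10^{-k+2}. For x ∈ E and k ≥ 0 set ε_k(x) = d_{x,10^{-k}}(P(x,10^{-k}), P(x,10^{-k+1})) + sup_{y ∈ E ∩ B(x,10^{-k-2})} d_{x,10^{-k+1}}(P(x,10^{-k}), P(y,10^{-k})), and J(x) = Σ_{k ≥ 0} ε_k(x)². If J(x) ≤ M for all x ∈ E, then there is a bijective map g : ℝ^n → ℝ^n with E ⊆ g(P(0,10)) and C⁻¹|x−y| ≤ |g(x) − g(y)| ≤ C|x−y| for all x, y ∈ ℝ^n. (Theorem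 1.21.) -/

import Mathlib

open Metric Set

noncomputable section

/-- `ℝⁿ`. -/
abbrev V (n : ℕ) := EuclideanSpace ℝ (Fin n)

/-- `P` is a `d`-dimensional affine plane of `ℝⁿ`. -/
def IsAffinePlane (n d : ℕ) (P : Set (V n)) : Prop :=
  ∃ Q : AffineSubspace ℝ (V n), (Q : Set (V n)) = P ∧
    Module.finrank ℝ Q.direction = d ∧ (Q : Set (V n)).Nonempty

/-- The normalized local Hausdorff distance `d_{x,r}(A,B)`. -/
def nhd {n : ℕ} (x : V n) (r : ℝ) (A B : Set (V n)) : ℝ :=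
  r⁻¹ * max (⨆ y ∈ A ∩ ball x r, infDist y B) (⨆ y ∈ B ∩ ball x r, infDist y A)

/-- The number `ε_k(x)` of (1.19), built from the planes `P`. -/
def epsK {n : ℕ} (E : Set (V n)) (P : V n → ℝ → Set (V n)) (x : V n) (k : ℕ) : ℝ :=
  nhd x ((10 : ℝ) ^ (-(k : ℤ)))
      (P x ((10 : ℝ) ^ (-(k : ℤ)))) (P x ((10 : ℝ) ^ (1 - (k : ℤ)))) +
    ⨆ y ∈ E ∩ ball x ((10 : ℝ) ^ (-(k : ℤ) - 2)),
      nhd x ((10 : ℝ) ^ (1 - (k : ℤ)))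
        (P x ((10 : ℝ) ^ (-(k : ℤ)))) (P y ((10 : ℝ) ^ (-(k : ℤ))))

/-- Uniform bound on the number of points of an `r`-separated set in a ball of radius `10 r`. -/
lemma exists_card_filter_ball_le (n : ℕ) : ∃ K : ℕ, ∀ r : ℝ, 0 < r → ∀ J : Finset (V n),
    (∀ i ∈ J, ∀ j ∈ J, i ≠ j → r < dist i j) → ∀ z : V n,
      (J.filter fun j => dist z j < 10 * r).card ≤ K := by
  classical
  obtain ⟨t, -, htf, ht⟩ := (isCompact_closedBall (0 : V n) 10).finite_cover_balls
    (e := 1 / 2) (by norm_num)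
  refine ⟨htf.toFinset.card, fun r hr J hJ z => ?_⟩
  have key : ∀ j : V n, dist z j < 10 * r → ∃ c ∈ t, dist (r⁻¹ • (j - z)) c < 1 / 2 := by
    intro j hj
    have hmem : r⁻¹ • (j - z) ∈ closedBall (0 : V n) 10 := by
      rw [mem_closedBall_zero_iff, norm_smul, norm_inv, Real.norm_of_nonneg hr.le,
        ← dist_eq_norm, dist_comm, inv_mul_le_iff₀ hr]
      linarith
    simpa using ht hmem
  choose! c hct hc using key
  refine Finset.card_le_card_of_injOn c (fun j hj => ?_) (fun i hi j hj hij => ?_)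
  · simpa using hct j (Finset.mem_filter.1 hj).2
  · by_contra hne
    simp only [Finset.coe_filter, mem_ofPred_eq] at hi hj
    have h1 := hc i hi.2
    have h2 := hc j hj.2
    rw [← hij] at h2
    have h3 : dist (r⁻¹ • (i - z)) (r⁻¹ • (j - z)) < 1 := by
      linarith [dist_triangle_right (r⁻¹ • (i - z)) (r⁻¹ • (j - z)) (c i)]
    rw [dist_smul₀, norm_inv, Real.norm_of_nonneg hr.le, dist_sub_right,
      inv_mul_lt_iff₀ hr] at h3
    linarith [hJ i hi.1 j hj.1 hne]

/-- A bounded set contains a finite `r`-separated, `3 r / 2`-dense subset. -/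
lemma exists_separated_net {n : ℕ} {E : Set (V n)} (hE : Bornology.IsBounded E) {r : ℝ}
    (hr : 0 < r) : ∃ J : Finset (V n), (∀ j ∈ J, j ∈ E) ∧
      (∀ i ∈ J, ∀ j ∈ J, i ≠ j → r < dist i j) ∧
      ∀ e ∈ E, ∃ j ∈ J, dist e j ≤ 3 / 2 * r := by
  classical
  obtain ⟨F, hFE, hFf, hF⟩ := finite_approx_of_totallyBounded
    (hE.isCompact_closure.totallyBounded.subset subset_closure) (r / 2) (by positivity)
  set A := hFf.toFinset.powerset.filter
    (fun J => ∀ i ∈ J, ∀ j ∈ J, i ≠ j → r < dist i j) with hA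
  have hne : A.Nonempty := ⟨∅, by simp [hA]⟩
  obtain ⟨J, hJA, hJ⟩ := Finset.exists_max_image A Finset.card hne
  simp only [hA, Finset.mem_filter, Finset.mem_powerset] at hJA hJ
  refine ⟨J, fun j hj => hFE (by simpa using hJA.1 hj), hJA.2, fun e he => ?_⟩
  obtain ⟨f, hf, hef⟩ : ∃ f ∈ F, dist e f < r / 2 := by simpa using hF he
  by_cases hfJ : ∃ j ∈ J, dist f j ≤ r
  · obtain ⟨j, hj, hfj⟩ := hfJ
    exact ⟨j, hj, by linarith [dist_triangle e f j]⟩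
  · push Not at hfJ
    exfalso
    have hfn : f ∉ J := fun h => by linarith [hfJ f h, dist_self f]
    have := hJ (insert f J) ⟨Finset.insert_subset (by simpa using hf) hJA.1, by
      intro i hi j hj hij
      rw [Finset.mem_insert] at hi hj
      rcases hi with rfl | hi <;> rcases hj with rfl | hj
      · exact absurd rfl hij
      · exact hfJ j hj
      · rw [dist_comm]; exact hfJ i hi
      · exact hJA.2 i hi j hj hij⟩
    rw [Finset.card_insert_of_notMem hfn] at this
    omega

/-- Lipschitz weights at scale `r`, attached to a finite subset of `E`, which sum up to one
in the `5 r`-neighbourhood of `E`. -/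
structure IsWeights {n : ℕ} (E : Set (V n)) (r Λ : ℝ) (J : Finset (V n))
    (θ : V n → V n → ℝ) : Prop where
  mem : ∀ j ∈ J, j ∈ E
  nonneg : ∀ j z, 0 ≤ θ j z
  sum_le : ∀ z, ∑ j ∈ J, θ j z ≤ 1
  near : ∀ j z, θ j z ≠ 0 → ‖z - j‖ < 10 * r
  sum_eq : ∀ e ∈ E, ∀ z, ‖z - e‖ ≤ 5 * r → ∑ j ∈ J, θ j z = 1
  lip : ∀ z z', ∑ j ∈ J, |θ j z - θ j z'| ≤ Λ / r * ‖z - z'‖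

lemma exists_isWeights (n : ℕ) : ∃ Λ : ℝ, 1 ≤ Λ ∧ ∀ E : Set (V n), Bornology.IsBounded E →
    ∀ r : ℝ, 0 < r → ∃ J θ, IsWeights E r Λ J θ := by
  classical
  obtain ⟨K, hK⟩ := exists_card_filter_ball_le n
  refine ⟨4 * K + 1, by linarith [(Nat.cast_nonneg K : (0 : ℝ) ≤ K)], fun E hE r hr => ?_⟩
  obtain ⟨J, hJE, hsep, hdense⟩ := exists_separated_net hE hr
  set φ : V n → V n → ℝ := fun j z => max 0 (1 - ‖z - j‖ / (10 * r)) with hφ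
  have φ_nonneg : ∀ j z, 0 ≤ φ j z := fun j z => le_max_left _ _
  have φ_near : ∀ j z, φ j z ≠ 0 → ‖z - j‖ < 10 * r := by
    intro j z h
    by_contra hlt
    push Not at hlt
    refine h (max_eq_left ?_)
    have : 1 ≤ ‖z - j‖ / (10 * r) := by rw [le_div_iff₀ (by positivity)]; linarith
    linarith
  have φ_lip : ∀ j z z', |φ j z - φ j z'| ≤ ‖z - z'‖ / (10 * r) := by
    intro j z z'
    refine (abs_max_sub_max_le_max _ _ _ _).trans (max_le (by simp; positivity) ?_)
    have : 1 - ‖z - j‖ / (10 * r) - (1 - ‖z' - j‖ / (10 * r))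
        = -((‖z - j‖ - ‖z' - j‖) / (10 * r)) := by ring
    rw [this, abs_neg, abs_div, abs_of_pos (by positivity : 0 < 10 * r)]
    gcongr
    simpa using abs_norm_sub_norm_le (z - j) (z' - j)
  have φ_sum : ∀ z z', ∑ j ∈ J, |φ j z - φ j z'| ≤ 2 * K * (‖z - z'‖ / (10 * r)) := by
    intro z z'
    set A := (J.filter fun j => dist z j < 10 * r) ∪ (J.filter fun j => dist z' j < 10 * r)
    have hA : A.card ≤ 2 * K := by
      refine (Finset.card_union_le _ _).trans ?_
      have := hK r hr J hsep z
      have := hK r hr J hsep z'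
      omega
    have : ∑ j ∈ J, |φ j z - φ j z'| = ∑ j ∈ A, |φ j z - φ j z'| := by
      symm
      refine Finset.sum_subset (fun j hj => ?_) (fun j hj hjA => ?_)
      · simp only [A, Finset.mem_union, Finset.mem_filter] at hj
        tauto
      · simp only [A, Finset.mem_union, Finset.mem_filter, not_or, not_and, dist_eq_norm] at hjA
        have h1 : φ j z = 0 := by
          by_contra h; exact hjA.1 hj (φ_near j z h)
        have h2 : φ j z' = 0 := by
          by_contra h; exact hjA.2 hj (φ_near j z' h)
        simp [h1, h2]
    rw [this]
    refine (Finset.sum_le_card_nsmul _ _ _ fun j _ => φ_lip j z z').trans ?_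
    rw [nsmul_eq_mul]
    gcongr
    exact_mod_cast hA
  set W : V n → ℝ := fun z => max (3 / 10) (∑ j ∈ J, φ j z) with hW
  have W_ge : ∀ z, 3 / 10 ≤ W z := fun z => le_max_left _ _
  have W_pos : ∀ z, 0 < W z := fun z => by linarith [W_ge z]
  have W_sum : ∀ z, ∑ j ∈ J, φ j z ≤ W z := fun z => le_max_right _ _
  have W_lip : ∀ z z', |W z' - W z| ≤ 2 * K * (‖z - z'‖ / (10 * r)) := by
    intro z z'
    refine (abs_max_sub_max_le_max _ _ _ _).trans (max_le (by simp; positivity) ?_)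
    rw [← Finset.sum_sub_distrib]
    refine (Finset.abs_sum_le_sum_abs _ _).trans ?_
    simpa [norm_sub_rev z' z] using φ_sum z' z
  refine ⟨J, fun j z => φ j z / W z, hJE, fun j z => div_nonneg (φ_nonneg j z) (W_pos z).le,
    fun z => ?_, fun j z h => φ_near j z fun h0 => h (by simp [h0]), fun e he z hz => ?_,
    fun z z' => ?_⟩
  · rw [← Finset.sum_div, div_le_one (W_pos z)]
    exact W_sum z
  · rw [← Finset.sum_div, div_eq_one_iff_eq (W_pos z).ne']
    refine (max_eq_right ?_).symm
    obtain ⟨j, hj, hej⟩ := hdense e he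
    refine le_trans ?_ (Finset.single_le_sum (fun i _ => φ_nonneg i z) hj)
    refine le_trans ?_ (le_max_right _ _)
    have h1 : ‖z - j‖ ≤ 7 * r := by
      rw [dist_eq_norm] at hej
      have := norm_add_le (z - e) (e - j)
      rw [sub_add_sub_cancel] at this
      linarith
    have h2 : ‖z - j‖ / (10 * r) ≤ 7 / 10 := by
      rw [div_le_div_iff₀ (by positivity) (by norm_num)]; linarith
    linarith
  · have h1 : ∀ j ∈ J, |φ j z / W z - φ j z' / W z'| ≤
        |φ j z - φ j z'| / W z + φ j z' / W z' * (|W z' - W z| / W z) := by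
      intro j _
      have : φ j z / W z - φ j z' / W z' =
          (φ j z - φ j z') / W z + φ j z' / W z' * ((W z' - W z) / W z) := by
        have := (W_pos z).ne'
        have := (W_pos z').ne'
        field_simp
        ring
      rw [this]
      refine (abs_add_le _ _).trans_eq ?_
      rw [abs_div, abs_mul, abs_div, abs_div, abs_of_pos (W_pos z), abs_of_pos (W_pos z'),
        abs_of_nonneg (φ_nonneg j z')]
    refine (Finset.sum_le_sum h1).trans ?_
    rw [Finset.sum_add_distrib, ← Finset.sum_div, ← Finset.sum_mul, ← Finset.sum_div]
    have h2 : (∑ j ∈ J, φ j z') / W z' ≤ 1 := by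
      rw [div_le_one (W_pos z')]; exact W_sum z'
    set X := 2 * K * (‖z - z'‖ / (10 * r)) with hX
    have hX0 : 0 ≤ X := by positivity
    have h3 : ∀ t, 0 ≤ t → t ≤ X → t / W z ≤ 10 / 3 * X := by
      intro t ht htX
      rw [div_le_iff₀ (W_pos z)]
      nlinarith [W_ge z]
    have h4 := h3 _ (Finset.sum_nonneg fun j _ => abs_nonneg _) (φ_sum z z')
    have h5 := h3 _ (abs_nonneg _) (W_lip z z')
    have h6 : (∑ j ∈ J, φ j z') / W z' * (|W z' - W z| / W z) ≤ 1 * (10 / 3 * X) :=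
      mul_le_mul h2 h5 (div_nonneg (abs_nonneg _) (W_pos z).le) zero_le_one
    have h7 : X = K / 5 * (‖z - z'‖ / r) := by rw [hX]; field_simp; ring
    have h8 : (4 * K + 1) / r * ‖z - z'‖ = (4 * K + 1) * (‖z - z'‖ / r) := by ring
    have h9 : 0 ≤ ‖z - z'‖ / r := by positivity
    have h10 : 0 ≤ (K : ℝ) * (‖z - z'‖ / r) := by positivity
    rw [h8]
    nlinarith

lemma norm_weighted_sum_le {ι F : Type*} [NormedAddCommGroup F] [NormedSpace ℝ F]
    {J : Finset ι} {θ : ι → ℝ} {w : ι → F} {c : ℝ} (h0 : ∀ j, 0 ≤ θ j)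
    (h1 : ∑ j ∈ J, θ j ≤ 1) (hc : 0 ≤ c) (hw : ∀ j ∈ J, θ j ≠ 0 → ‖w j‖ ≤ c) :
    ‖∑ j ∈ J, θ j • w j‖ ≤ c := by
  refine (norm_sum_le _ _).trans ?_
  calc ∑ j ∈ J, ‖θ j • w j‖ ≤ ∑ j ∈ J, θ j * c := by
        refine Finset.sum_le_sum fun j hj => ?_
        rw [norm_smul, Real.norm_of_nonneg (h0 j)]
        by_cases h : θ j = 0
        · simp [h]
        · exact mul_le_mul_of_nonneg_left (hw j hj h) (h0 j)
    _ ≤ c := by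
        rw [← Finset.sum_mul]
        exact mul_le_of_le_one_left hc h1

lemma norm_signed_sum_le {ι F : Type*} [NormedAddCommGroup F] [NormedSpace ℝ F]
    {J : Finset ι} {δ : ι → ℝ} {w : ι → F} {c l : ℝ} (h1 : ∑ j ∈ J, |δ j| ≤ l) (hc : 0 ≤ c)
    (hw : ∀ j ∈ J, δ j ≠ 0 → ‖w j‖ ≤ c) : ‖∑ j ∈ J, δ j • w j‖ ≤ l * c := by
  refine (norm_sum_le _ _).trans ?_
  calc ∑ j ∈ J, ‖δ j • w j‖ ≤ ∑ j ∈ J, |δ j| * c := by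
        refine Finset.sum_le_sum fun j hj => ?_
        rw [norm_smul, Real.norm_eq_abs]
        by_cases h : δ j = 0
        · simp [h]
        · exact mul_le_mul_of_nonneg_left (hw j hj h) (abs_nonneg _)
    _ ≤ l * c := by
        rw [← Finset.sum_mul]
        exact mul_le_mul_of_nonneg_right h1 hc

/-- The width of the tube around `E` in which the planes of generation `k` are used. -/
def scale (k : ℕ) : ℝ := (1 / 10) ^ (k + 4)

lemma scale_pos (k : ℕ) : 0 < scale k := by unfold scale; positivity

lemma scale_succ (k : ℕ) : scale (k + 1) = scale k / 10 := by unfold scale; ring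

/-- A set with a coherent family of approximating linear subspaces `D x k` at the points of `E`
and scales `10⁻ᵏ`, with oscillations controlled by `a k x`, together with weights at
each scale. -/
structure FlatData (n : ℕ) where
  E : Set (V n)
  D : V n → ℕ → Submodule ℝ (V n)
  U : Submodule ℝ (V n)
  a : ℕ → V n → ℝ
  Λ : ℝ
  η : ℝ
  M : ℝ
  J : ℕ → Finset (V n)
  θ : ℕ → V n → V n → ℝ
  weights : ∀ k, IsWeights E (scale k) Λ (J k) (θ k)
  one_le : 1 ≤ Λ
  eta_nonneg : 0 ≤ η
  M_nonneg : 0 ≤ M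
  small : 10 ^ 10 * Λ ^ 2 * η ≤ 1
  a_nonneg : ∀ k p, 0 ≤ a k p
  a_le : ∀ k, ∀ p ∈ E, a k p ≤ η
  sum_a : ∀ p ∈ E, ∀ N : ℕ, ∑ k ∈ Finset.range N, a k p ^ 2 ≤ M
  near_proj : ∀ k, ∀ p ∈ E, ∀ x ∈ E, ‖x - p‖ < 100 * scale k →
    ‖(D x k).starProjection - (D p k).starProjection‖ ≤ a k p
  near_dist : ∀ k, ∀ p ∈ E, ∀ x ∈ E, ‖x - p‖ < 100 * scale k →
    ‖(D p k)ᗮ.starProjection (x - p)‖ ≤ a k p * scale k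
  next_proj : ∀ k, ∀ p ∈ E,
    ‖(D p (k + 1)).starProjection - (D p k).starProjection‖ ≤ a (k + 1) p
  init_proj : ∀ p ∈ E, ‖(D p 0).starProjection - U.starProjection‖ ≤ a 0 p
  init_dist : ∀ p ∈ E, ‖Uᗮ.starProjection p‖ ≤ a 0 p * scale 0

namespace FlatData

variable {n : ℕ} (S : FlatData n)

/-- The orthogonal projection onto the tangent space at `p` of generation `k`. -/
def T (p : V n) (k : ℕ) : V n →L[ℝ] V n := (S.D p k).starProjection

/-- The orthogonal projection onto the normal space at `p` of generation `k`. -/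
def N (p : V n) (k : ℕ) : V n →L[ℝ] V n := (S.D p k)ᗮ.starProjection

lemma N_apply (p : V n) (k : ℕ) (v : V n) : S.N p k v = v - S.T p k v := by
  simp [N, T, Submodule.starProjection_orthogonal_val]

lemma T_T (p : V n) (k : ℕ) (v : V n) : S.T p k (S.T p k v) = S.T p k v :=
  Submodule.starProjection_eq_self_iff.2 (Submodule.starProjection_apply_mem _ _)

lemma N_N (p : V n) (k : ℕ) (v : V n) : S.N p k (S.N p k v) = S.N p k v :=
  Submodule.starProjection_eq_self_iff.2 (Submodule.starProjection_apply_mem _ _)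

lemma T_N (p : V n) (k : ℕ) (v : V n) : S.T p k (S.N p k v) = 0 := by
  rw [N_apply, map_sub, T_T, sub_self]

lemma norm_T_le (p : V n) (k : ℕ) (v : V n) : ‖S.T p k v‖ ≤ ‖v‖ :=
  Submodule.norm_starProjection_apply_le _ _

lemma norm_N_le (p : V n) (k : ℕ) (v : V n) : ‖S.N p k v‖ ≤ ‖v‖ :=
  Submodule.norm_starProjection_apply_le _ _

lemma inner_T (p : V n) (k : ℕ) (v w : V n) :
    inner ℝ (S.T p k v) w = inner ℝ v (S.T p k w) :=
  Submodule.inner_starProjection_left_eq_right _ _ _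

lemma inner_N (p : V n) (k : ℕ) (v w : V n) :
    inner ℝ (S.N p k v) w = inner ℝ v (S.N p k w) :=
  Submodule.inner_starProjection_left_eq_right _ _ _

lemma N_add_T (p : V n) (k : ℕ) (v : V n) : S.N p k v + S.T p k v = v := by
  rw [N_apply, sub_add_cancel]

lemma N_sub_N (p q : V n) (k l : ℕ) (v : V n) :
    S.N p k v - S.N q l v = -(S.T p k v - S.T q l v) := by
  simp only [N_apply]; abel

/-- The map pushing points towards the planes of generation `k`. -/
def sig (k : ℕ) (z : V n) : V n := z - ∑ j ∈ S.J k, S.θ k j z • S.N j k (z - j)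

/-- The averaged tangential projection of generation `k`. -/
def tau (k : ℕ) (z : V n) : V n →L[ℝ] V n := ∑ j ∈ S.J k, S.θ k j z • S.T j k

lemma tau_apply (k : ℕ) (z v : V n) :
    S.tau k z v = ∑ j ∈ S.J k, S.θ k j z • S.T j k v := by
  simp [tau]

section Local

variable {S} {k : ℕ} {p : V n}

lemma norm_T_sub_le (hp : p ∈ S.E) {j : V n} (hj : j ∈ S.E) (hjp : ‖j - p‖ < 50 * scale k)
    (v : V n) : ‖S.T j k v - S.T p k v‖ ≤ S.a k p * ‖v‖ := by
  have h := S.near_proj k p hp j hj (by linarith [scale_pos k])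
  exact ((S.T j k - S.T p k).le_opNorm v).trans (mul_le_mul_of_nonneg_right h (norm_nonneg _))

lemma norm_N_sub_le (hp : p ∈ S.E) {j : V n} (hj : j ∈ S.E) (hjp : ‖j - p‖ < 50 * scale k)
    (v : V n) : ‖S.N j k v - S.N p k v‖ ≤ S.a k p * ‖v‖ := by
  rw [N_sub_N, norm_neg]; exact norm_T_sub_le hp hj hjp v

lemma norm_N_sub_base_le (hp : p ∈ S.E) {j z : V n} (hj : j ∈ S.E)
    (hjp : ‖j - p‖ < 50 * scale k) (hz : ‖z - p‖ ≤ 40 * scale k) :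
    ‖S.N j k (z - j) - S.N p k (z - p)‖ ≤ 91 * S.a k p * scale k := by
  have h1 : S.N j k (z - j) - S.N p k (z - p)
      = (S.N j k (z - j) - S.N p k (z - j)) - S.N p k (j - p) := by
    simp only [map_sub]; abel
  have h2 := norm_N_sub_le hp hj hjp (z - j)
  have h3 := S.near_dist k p hp j hj (by linarith [scale_pos k])
  have h4 : ‖z - j‖ ≤ 90 * scale k := by
    have := norm_sub_le (z - p) (j - p)
    rw [sub_sub_sub_cancel_right] at this
    linarith
  have h5 := mul_le_mul_of_nonneg_left h4 (S.a_nonneg k p)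
  rw [h1]
  refine (norm_sub_le _ _).trans ?_
  have h6 : ‖S.N p k (j - p)‖ ≤ S.a k p * scale k := h3
  linarith

lemma index_near {j z : V n} (hz : ‖z - p‖ ≤ 40 * scale k) (h : S.θ k j z ≠ 0) :
    ‖j - p‖ < 50 * scale k := by
  have h1 := (S.weights k).near j z h
  have := norm_sub_le (z - p) (z - j)
  rw [sub_sub_sub_cancel_left] at this
  linarith

lemma index_near_of_sub {j z z' : V n} (hz : ‖z - p‖ ≤ 40 * scale k)
    (hz' : ‖z' - p‖ ≤ 40 * scale k) (h : S.θ k j z - S.θ k j z' ≠ 0) :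
    ‖j - p‖ < 50 * scale k := by
  by_cases h0 : S.θ k j z = 0
  · refine index_near (S := S) hz' fun h1 => h ?_
    rw [h0, h1, sub_zero]
  · exact index_near hz h0

lemma norm_N_index_le (hp : p ∈ S.E) {j z : V n} (hj : j ∈ S.E)
    (hjp : ‖j - p‖ < 50 * scale k) (hz : ‖z - p‖ ≤ 40 * scale k) :
    ‖S.N j k (z - j)‖ ≤ ‖S.N p k (z - p)‖ + 91 * S.a k p * scale k := by
  have h := norm_N_sub_base_le hp hj hjp hz
  have := norm_add_le (S.N j k (z - j) - S.N p k (z - p)) (S.N p k (z - p))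
  rw [sub_add_cancel] at this
  linarith

lemma ar_nonneg : 0 ≤ 91 * S.a k p * scale k :=
  mul_nonneg (mul_nonneg (by norm_num) (S.a_nonneg k p)) (scale_pos k).le

lemma norm_sig_sub_le (hp : p ∈ S.E) {z : V n} (hz : ‖z - p‖ ≤ 40 * scale k) :
    ‖S.sig k z - z‖ ≤ ‖S.N p k (z - p)‖ + 91 * S.a k p * scale k := by
  have hW := S.weights k
  rw [sig, sub_sub_cancel_left, norm_neg]
  exact norm_weighted_sum_le (fun j => hW.nonneg j z) (hW.sum_le z)
    (add_nonneg (norm_nonneg _) ar_nonneg)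
    fun j hj h => norm_N_index_le hp (hW.mem j hj) (index_near hz h) hz

/-- Where the weights sum up to one, the image is close to the plane at `p`. -/
lemma norm_N_sig_le (hp : p ∈ S.E) {z : V n} (hz : ‖z - p‖ ≤ 40 * scale k)
    (h1 : ∑ j ∈ S.J k, S.θ k j z = 1) :
    ‖S.N p k (S.sig k z - p)‖ ≤ 91 * S.a k p * scale k := by
  have hW := S.weights k
  have : S.N p k (S.sig k z - p) =
      -∑ j ∈ S.J k, S.θ k j z • S.N p k (S.N j k (z - j) - S.N p k (z - p)) := by
    have e1 : S.sig k z - p = (z - p) - ∑ j ∈ S.J k, S.θ k j z • S.N j k (z - j) := by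
      rw [sig]; abel
    rw [e1, map_sub, map_sum]
    simp only [map_sub (S.N p k) (S.N _ k _), N_N, smul_sub, map_smul, Finset.sum_sub_distrib]
    rw [← Finset.sum_smul, h1, one_smul]
    abel
  rw [this, norm_neg]
  exact norm_weighted_sum_le (fun j => hW.nonneg j z) (hW.sum_le z) ar_nonneg fun j hj h =>
    (S.norm_N_le _ _ _).trans (norm_N_sub_base_le hp (hW.mem j hj) (index_near hz h) hz)

lemma disp_eq (z z' : V n) : (z - S.sig k z) - (z' - S.sig k z') =
    ∑ j ∈ S.J k, S.θ k j z • S.N j k (z - z') +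
      ∑ j ∈ S.J k, (S.θ k j z - S.θ k j z') • S.N j k (z' - j) := by
  rw [sig, sig, sub_sub_cancel, sub_sub_cancel, ← Finset.sum_sub_distrib,
    ← Finset.sum_add_distrib]
  refine Finset.sum_congr rfl fun j _ => ?_
  have : z - j = (z - z') + (z' - j) := by abel
  rw [this, map_add, smul_add, sub_smul]
  abel

lemma norm_N_index_dir_le (hp : p ∈ S.E) {j : V n} (hj : j ∈ S.E)
    (hjp : ‖j - p‖ < 50 * scale k) (v : V n) :
    ‖S.N j k v‖ ≤ ‖S.N p k v‖ + S.a k p * ‖v‖ := by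
  have h := norm_N_sub_le hp hj hjp v
  have := norm_add_le (S.N j k v - S.N p k v) (S.N p k v)
  rw [sub_add_cancel] at this
  linarith

lemma norm_T_index_dir_le (hp : p ∈ S.E) {j : V n} (hj : j ∈ S.E)
    (hjp : ‖j - p‖ < 50 * scale k) (v : V n) :
    ‖S.T j k v‖ ≤ ‖S.T p k v‖ + S.a k p * ‖v‖ := by
  have h := norm_T_sub_le hp hj hjp v
  have := norm_add_le (S.T j k v - S.T p k v) (S.T p k v)
  rw [sub_add_cancel] at this
  linarith

lemma norm_disp_le (hp : p ∈ S.E) {z z' : V n} (hz : ‖z - p‖ ≤ 40 * scale k)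
    (hz' : ‖z' - p‖ ≤ 40 * scale k) :
    ‖(z - S.sig k z) - (z' - S.sig k z')‖ ≤
      (‖S.N p k (z - z')‖ + S.a k p * ‖z - z'‖) + S.Λ / scale k * ‖z - z'‖ *
        (‖S.N p k (z' - p)‖ + 91 * S.a k p * scale k) := by
  have hW := S.weights k
  rw [disp_eq]
  refine (norm_add_le _ _).trans (add_le_add ?_ ?_)
  · exact norm_weighted_sum_le (fun j => hW.nonneg j z) (hW.sum_le z)
      (add_nonneg (norm_nonneg _) (mul_nonneg (S.a_nonneg k p) (norm_nonneg _)))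
      fun j hj h => norm_N_index_dir_le hp (hW.mem j hj) (index_near hz h) _
  · exact norm_signed_sum_le (hW.lip z z') (add_nonneg (norm_nonneg _) ar_nonneg)
      fun j hj h => norm_N_index_le hp (hW.mem j hj) (index_near_of_sub hz hz' h) hz'

lemma norm_T_N_index_le (hp : p ∈ S.E) {j : V n} (hj : j ∈ S.E)
    (hjp : ‖j - p‖ < 50 * scale k) (v : V n) :
    ‖S.T p k (S.N j k v)‖ ≤ S.a k p * ‖S.N j k v‖ := by
  have h := norm_T_sub_le hp hj hjp (S.N j k v)
  rwa [T_N, zero_sub, norm_neg] at h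

lemma norm_T_disp_le (hp : p ∈ S.E) {z z' : V n} (hz : ‖z - p‖ ≤ 40 * scale k)
    (hz' : ‖z' - p‖ ≤ 40 * scale k) :
    ‖S.T p k ((z - S.sig k z) - (z' - S.sig k z'))‖ ≤
      S.a k p * ((‖S.N p k (z - z')‖ + S.a k p * ‖z - z'‖) + S.Λ / scale k * ‖z - z'‖ *
        (‖S.N p k (z' - p)‖ + 91 * S.a k p * scale k)) := by
  have hW := S.weights k
  have ha := S.a_nonneg k p
  rw [disp_eq, map_add, map_sum, map_sum, mul_add]
  simp only [map_smul]
  refine (norm_add_le _ _).trans (add_le_add ?_ ?_)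
  · refine norm_weighted_sum_le (fun j => hW.nonneg j z) (hW.sum_le z)
      (mul_nonneg ha (add_nonneg (norm_nonneg _) (mul_nonneg ha (norm_nonneg _))))
      fun j hj h => ?_
    have hjp := index_near hz h
    exact (norm_T_N_index_le hp (hW.mem j hj) hjp _).trans
      (mul_le_mul_of_nonneg_left (norm_N_index_dir_le hp (hW.mem j hj) hjp _) ha)
  · rw [mul_left_comm]
    refine norm_signed_sum_le (hW.lip z z')
      (mul_nonneg ha (add_nonneg (norm_nonneg _) ar_nonneg)) fun j hj h => ?_
    have hjp := index_near_of_sub hz hz' h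
    exact (norm_T_N_index_le hp (hW.mem j hj) hjp _).trans
      (mul_le_mul_of_nonneg_left (norm_N_index_le hp (hW.mem j hj) hjp hz') ha)

/-- Where the weights sum up to one, chords of the image are nearly tangent to the plane
at `p`. -/
lemma norm_N_sig_sub_sig_le (hp : p ∈ S.E) {z z' : V n} (hz : ‖z - p‖ ≤ 40 * scale k)
    (hz' : ‖z' - p‖ ≤ 40 * scale k) (h1 : ∑ j ∈ S.J k, S.θ k j z = 1)
    (h1' : ∑ j ∈ S.J k, S.θ k j z' = 1) :
    ‖S.N p k (S.sig k z - S.sig k z')‖ ≤ 92 * S.Λ * S.a k p * ‖z - z'‖ := by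
  have hW := S.weights k
  have ha := S.a_nonneg k p
  have hr := scale_pos k
  have e : S.N p k (S.sig k z - S.sig k z') =
      -(∑ j ∈ S.J k, S.θ k j z • S.N p k (S.N j k (z - z') - S.N p k (z - z'))) -
        ∑ j ∈ S.J k, (S.θ k j z - S.θ k j z') •
          S.N p k (S.N j k (z' - j) - S.N p k (z' - p)) := by
    have e1 : S.sig k z - S.sig k z' = (z - z') - ((z - S.sig k z) - (z' - S.sig k z')) := by
      abel
    rw [e1, disp_eq, map_sub, map_add, map_sum, map_sum]
    simp only [map_sub (S.N p k) (S.N _ k _), N_N, smul_sub, map_smul, Finset.sum_sub_distrib]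
    rw [← Finset.sum_smul, ← Finset.sum_smul, Finset.sum_sub_distrib, h1, h1', one_smul,
      sub_self, zero_smul]
    abel
  have b1 : ‖∑ j ∈ S.J k, S.θ k j z • S.N p k (S.N j k (z - z') - S.N p k (z - z'))‖ ≤
      S.a k p * ‖z - z'‖ :=
    norm_weighted_sum_le (fun j => hW.nonneg j z) (hW.sum_le z)
      (mul_nonneg ha (norm_nonneg _)) fun j hj h =>
      (S.norm_N_le _ _ _).trans (norm_N_sub_le hp (hW.mem j hj) (index_near hz h) _)
  have b2 : ‖∑ j ∈ S.J k, (S.θ k j z - S.θ k j z') •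
      S.N p k (S.N j k (z' - j) - S.N p k (z' - p))‖ ≤
      S.Λ / scale k * ‖z - z'‖ * (91 * S.a k p * scale k) :=
    norm_signed_sum_le (hW.lip z z') ar_nonneg fun j hj h =>
      (S.norm_N_le _ _ _).trans
        (norm_N_sub_base_le hp (hW.mem j hj) (index_near_of_sub hz hz' h) hz')
  have e2 : S.Λ / scale k * ‖z - z'‖ * (91 * S.a k p * scale k)
      = 91 * S.Λ * S.a k p * ‖z - z'‖ := by field_simp
  have e3 : 0 ≤ (S.Λ - 1) * (S.a k p * ‖z - z'‖) :=
    mul_nonneg (by linarith [S.one_le]) (mul_nonneg ha (norm_nonneg _))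
  rw [e]
  refine (norm_sub_le _ _).trans ?_
  rw [norm_neg]
  rw [e2] at b2
  nlinarith

lemma norm_tau_le (hp : p ∈ S.E) {z : V n} (hz : ‖z - p‖ ≤ 40 * scale k) (v : V n) :
    ‖S.tau k z v‖ ≤ ‖S.T p k v‖ + S.a k p * ‖v‖ := by
  have hW := S.weights k
  rw [tau_apply]
  exact norm_weighted_sum_le (fun j => hW.nonneg j z) (hW.sum_le z)
    (add_nonneg (norm_nonneg _) (mul_nonneg (S.a_nonneg k p) (norm_nonneg _)))
    fun j hj h => norm_T_index_dir_le hp (hW.mem j hj) (index_near hz h) _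

lemma norm_tau_le_self (z v : V n) : ‖S.tau k z v‖ ≤ ‖v‖ := by
  have hW := S.weights k
  rw [tau_apply]
  exact norm_weighted_sum_le (fun j => hW.nonneg j z) (hW.sum_le z) (norm_nonneg _)
    fun j _ _ => S.norm_T_le _ _ _

lemma norm_tau_sub_tau_le (hp : p ∈ S.E) {z z' : V n} (hz : ‖z - p‖ ≤ 40 * scale k)
    (hz' : ‖z' - p‖ ≤ 40 * scale k) (v : V n) :
    ‖S.tau k z v - S.tau k z' v‖ ≤
      S.Λ / scale k * ‖z - z'‖ * (‖S.T p k v‖ + S.a k p * ‖v‖) := by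
  have hW := S.weights k
  rw [tau_apply, tau_apply, ← Finset.sum_sub_distrib]
  simp only [← sub_smul]
  exact norm_signed_sum_le (hW.lip z z')
    (add_nonneg (norm_nonneg _) (mul_nonneg (S.a_nonneg k p) (norm_nonneg _)))
    fun j hj h => norm_T_index_dir_le hp (hW.mem j hj) (index_near_of_sub hz hz' h) _

lemma norm_T_sub_tau_le (hp : p ∈ S.E) {z : V n} (hz : ‖z - p‖ ≤ 40 * scale k)
    (h1 : ∑ j ∈ S.J k, S.θ k j z = 1) (v : V n) :
    ‖S.T p k (v - S.tau k z v)‖ ≤ S.a k p * ‖v‖ := by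
  have hW := S.weights k
  have : S.T p k (v - S.tau k z v) =
      -∑ j ∈ S.J k, S.θ k j z • S.T p k (S.T j k v - S.T p k v) := by
    rw [map_sub, tau_apply, map_sum]
    simp only [map_sub (S.T p k) (S.T _ k _), T_T, smul_sub, map_smul, Finset.sum_sub_distrib]
    rw [← Finset.sum_smul, h1, one_smul]
    abel
  rw [this, norm_neg]
  exact norm_weighted_sum_le (fun j => hW.nonneg j z) (hW.sum_le z)
    (mul_nonneg (S.a_nonneg k p) (norm_nonneg _)) fun j hj h =>
    (S.norm_T_le _ _ _).trans (norm_T_sub_le hp (hW.mem j hj) (index_near hz h) _)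

lemma norm_sub_tau_le (z v : V n) : ‖v - S.tau k z v‖ ≤ ‖v‖ := by
  have hW := S.weights k
  have : v - S.tau k z v = (1 - ∑ j ∈ S.J k, S.θ k j z) • v +
      ∑ j ∈ S.J k, S.θ k j z • S.N j k v := by
    simp only [tau_apply, N_apply, smul_sub, Finset.sum_sub_distrib, ← Finset.sum_smul, sub_smul,
      one_smul]
    abel
  rw [this]
  refine (norm_add_le _ _).trans ?_
  have h2 : ‖∑ j ∈ S.J k, S.θ k j z • S.N j k v‖ ≤ (∑ j ∈ S.J k, S.θ k j z) * ‖v‖ :=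
    norm_signed_sum_le (Finset.sum_le_sum fun j _ => (abs_of_nonneg (hW.nonneg j z)).le)
      (norm_nonneg _) fun j _ _ => S.norm_N_le _ _ _
  rw [norm_smul, Real.norm_of_nonneg (by linarith [hW.sum_le z])]
  linarith

lemma norm_sub_tau_sq_ge (hp : p ∈ S.E) {z : V n} (hz : ‖z - p‖ ≤ 40 * scale k) (v : V n) :
    ‖v‖ ^ 2 - 2 * (‖S.T p k v‖ + S.a k p * ‖v‖) ^ 2 ≤ ‖v - S.tau k z v‖ ^ 2 := by
  have hW := S.weights k
  set c := ‖S.T p k v‖ + S.a k p * ‖v‖ with hc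
  have hinner : inner ℝ v (S.tau k z v) ≤ c ^ 2 := by
    rw [tau_apply, inner_sum]
    calc ∑ j ∈ S.J k, inner ℝ v (S.θ k j z • S.T j k v)
        ≤ ∑ j ∈ S.J k, S.θ k j z * c ^ 2 := by
          refine Finset.sum_le_sum fun j hj => ?_
          rw [inner_smul_right]
          by_cases h : S.θ k j z = 0
          · simp [h]
          refine mul_le_mul_of_nonneg_left ?_ (hW.nonneg j z)
          rw [← T_T, ← inner_T, real_inner_self_eq_norm_sq]
          exact pow_le_pow_left₀ (norm_nonneg _)
            (norm_T_index_dir_le hp (hW.mem j hj) (index_near hz h) _) 2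
      _ ≤ c ^ 2 := by
          rw [← Finset.sum_mul]
          exact mul_le_of_le_one_left (sq_nonneg _) (hW.sum_le z)
  rw [norm_sub_sq_real]
  nlinarith [sq_nonneg ‖S.tau k z v‖]

end Local

lemma sig_tau_or_near (k : ℕ) (z : V n) :
    (S.sig k z = z ∧ S.tau k z = 0) ∨ ∃ p ∈ S.E, ‖z - p‖ < 10 * scale k := by
  by_cases h : ∃ j ∈ S.J k, S.θ k j z ≠ 0
  · obtain ⟨j, hj, h⟩ := h
    exact Or.inr ⟨j, (S.weights k).mem j hj, (S.weights k).near j z h⟩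
  · push Not at h
    left
    constructor
    · rw [sig, Finset.sum_eq_zero fun j hj => by rw [h j hj, zero_smul], sub_zero]
    · ext1 v
      rw [tau_apply, Finset.sum_eq_zero fun j hj => by rw [h j hj, zero_smul]]
      rfl

/-- The parametrization of generation `k` of the surface over `U`. -/
def f : ℕ → V n → V n
  | 0, x => x
  | k + 1, x => S.sig k (f k x)

/-- The linear maps carrying `Uᗮ` to almost normal vectors of the surface of generation `k`. -/
def L : ℕ → V n → V n →L[ℝ] V n
  | 0, _ => ContinuousLinearMap.id ℝ (V n)
  | k + 1, x => L k x - (S.tau k (S.f k x)).comp (L k x)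

lemma f_zero (x : V n) : S.f 0 x = x := rfl

lemma f_succ (k : ℕ) (x : V n) : S.f (k + 1) x = S.sig k (S.f k x) := rfl

lemma L_zero (x v : V n) : S.L 0 x v = v := rfl

lemma L_succ (k : ℕ) (x v : V n) :
    S.L (k + 1) x v = S.L k x v - S.tau k (S.f k x) (S.L k x v) := rfl

/-- The flatness of the surface of generation `k` near `p`. -/
def A : ℕ → V n → ℝ
  | 0, p => 2000 * S.Λ * S.a 0 p
  | k + 1, p => 2000 * S.Λ * (S.a k p + S.a (k + 1) p)

/-- The relative size of the displacements of generation `k` near `p`. -/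
def b (k : ℕ) (p : V n) : ℝ := 3 * S.Λ * S.A k p

/-- A uniform bound for `b`. -/
def β : ℝ := 12000 * S.Λ ^ 2 * S.η

lemma a_le_A (k : ℕ) (p : V n) : 2000 * S.Λ * S.a k p ≤ S.A k p := by
  have h1 := S.one_le
  cases k with
  | zero => exact le_rfl
  | succ k =>
    have := mul_nonneg (by linarith : 0 ≤ 2000 * S.Λ) (S.a_nonneg k p)
    simp only [A, mul_add]
    linarith

lemma a_le_A' (k : ℕ) (p : V n) : 2000 * S.a k p ≤ S.A k p := by
  have := mul_nonneg (sub_nonneg.2 S.one_le) (S.a_nonneg k p)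
  linarith [S.a_le_A k p]

lemma A_nonneg (k : ℕ) (p : V n) : 0 ≤ S.A k p := by
  linarith [S.a_le_A' k p, S.a_nonneg k p]

lemma A_le_b (k : ℕ) (p : V n) : 3 * S.A k p ≤ S.b k p := by
  have := mul_nonneg (sub_nonneg.2 S.one_le) (S.A_nonneg k p)
  unfold b
  linarith

lemma b_nonneg (k : ℕ) (p : V n) : 0 ≤ S.b k p := by
  linarith [S.A_le_b k p, S.A_nonneg k p]

lemma beta_nonneg : 0 ≤ S.β := by
  have := S.eta_nonneg
  unfold β
  positivity

lemma beta_le : S.β ≤ 1 / 500000 := by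
  have := S.small
  unfold β
  linarith

lemma b_le (k : ℕ) {p : V n} (hp : p ∈ S.E) : S.b k p ≤ S.β := by
  have h1 := S.one_le
  have h2 : S.A k p ≤ 4000 * S.Λ * S.η := by
    cases k with
    | zero =>
      have := mul_le_mul_of_nonneg_left (S.a_le 0 p hp) (by linarith : 0 ≤ 2000 * S.Λ)
      have := mul_nonneg (by linarith : 0 ≤ 2000 * S.Λ) S.eta_nonneg
      simp only [A]
      linarith
    | succ k =>
      have := mul_le_mul_of_nonneg_left (add_le_add (S.a_le k p hp) (S.a_le (k + 1) p hp))
        (by linarith : 0 ≤ 2000 * S.Λ)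
      simp only [A]
      linarith
  have := mul_le_mul_of_nonneg_left h2 (by linarith : 0 ≤ 3 * S.Λ)
  unfold b β
  linarith

lemma sum_b_le {p : V n} (hp : p ∈ S.E) (m : ℕ) :
    ∑ k ∈ Finset.range m, S.b k p ^ 2 ≤ 144000000 * S.Λ ^ 4 * S.M := by
  have h0 : ∀ k, S.b k p ^ 2 ≤ 72000000 * S.Λ ^ 4 *
      ((if k = 0 then 0 else S.a (k - 1) p ^ 2) + S.a k p ^ 2) := by
    intro k
    have hL : 0 ≤ S.Λ ^ 4 := by positivity
    cases k with
    | zero =>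
      have := mul_nonneg hL (sq_nonneg (S.a 0 p))
      simp only [b, A, if_true]
      linear_combination 36000000 * this
    | succ k =>
      have := mul_nonneg hL (sq_nonneg (S.a k p - S.a (k + 1) p))
      simp only [b, A, Nat.succ_ne_zero, if_false, Nat.add_sub_cancel]
      linear_combination 36000000 * this
  have h1 : ∑ k ∈ Finset.range m, (if k = 0 then 0 else S.a (k - 1) p ^ 2) ≤ S.M := by
    cases m with
    | zero => simpa using S.sum_a p hp 0
    | succ m =>
      rw [Finset.sum_range_succ']
      simpa using S.sum_a p hp m
  calc ∑ k ∈ Finset.range m, S.b k p ^ 2 ≤ ∑ k ∈ Finset.range m, 72000000 * S.Λ ^ 4 *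
      ((if k = 0 then 0 else S.a (k - 1) p ^ 2) + S.a k p ^ 2) :=
        Finset.sum_le_sum fun k _ => h0 k
    _ ≤ 72000000 * S.Λ ^ 4 * (S.M + S.M) := by
        rw [← Finset.mul_sum, Finset.sum_add_distrib]
        gcongr
        exact S.sum_a p hp m
    _ = _ := by ring

lemma norm_T_succ_sub_le (k : ℕ) {p : V n} (hp : p ∈ S.E) (v : V n) :
    ‖S.T p (k + 1) v - S.T p k v‖ ≤ S.a (k + 1) p * ‖v‖ :=
  ((S.T p (k + 1) - S.T p k).le_opNorm v).trans
    (mul_le_mul_of_nonneg_right (S.next_proj k p hp) (norm_nonneg _))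

lemma norm_T_zero_sub_le {p : V n} (hp : p ∈ S.E) (v : V n) :
    ‖S.T p 0 v - S.U.starProjection v‖ ≤ S.a 0 p * ‖v‖ :=
  ((S.T p 0 - S.U.starProjection).le_opNorm v).trans
    (mul_le_mul_of_nonneg_right (S.init_proj p hp) (norm_nonneg _))

lemma norm_N_succ_le (k : ℕ) {p : V n} (hp : p ∈ S.E) (v : V n) :
    ‖S.N p (k + 1) v‖ ≤ ‖S.N p k v‖ + S.a (k + 1) p * ‖v‖ := by
  have h := S.norm_T_succ_sub_le k hp v
  have h1 := norm_sub_le (S.N p k v) (S.T p (k + 1) v - S.T p k v)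
  have e : S.N p k v - (S.T p (k + 1) v - S.T p k v) = S.N p (k + 1) v := by
    simp only [N_apply]; abel
  rw [e] at h1
  linarith

lemma norm_T_succ_le (k : ℕ) {p : V n} (hp : p ∈ S.E) (v : V n) :
    ‖S.T p (k + 1) v‖ ≤ ‖S.T p k v‖ + S.a (k + 1) p * ‖v‖ := by
  have h := S.norm_T_succ_sub_le k hp v
  have h1 := norm_add_le (S.T p k v) (S.T p (k + 1) v - S.T p k v)
  rw [add_sub_cancel] at h1
  linarith

lemma norm_N_zero_le {p : V n} (hp : p ∈ S.E) {v : V n} (hv : v ∈ S.U) :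
    ‖S.N p 0 v‖ ≤ S.a 0 p * ‖v‖ := by
  have h := S.norm_T_zero_sub_le hp v
  rwa [Submodule.starProjection_eq_self_iff.2 hv, ← norm_neg, neg_sub, ← N_apply] at h

lemma norm_T_zero_le {p : V n} (hp : p ∈ S.E) {v : V n} (hv : v ∈ S.Uᗮ) :
    ‖S.T p 0 v‖ ≤ S.a 0 p * ‖v‖ := by
  have h := S.norm_T_zero_sub_le hp v
  rwa [S.U.starProjection_apply_eq_zero_iff.2 hv, sub_zero] at h

section Surface

variable {S} {k : ℕ} {x x' y p : V n}

lemma norm_sig_sub_self_le {z : V n} (h : ∀ p ∈ S.E, ‖z - p‖ ≤ 40 * scale k →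
    ‖S.N p k (z - p)‖ ≤ S.A k p * scale k) : ‖S.sig k z - z‖ ≤ S.β * scale k := by
  rcases S.sig_tau_or_near k z with h1 | ⟨p, hp, hz⟩
  · rw [h1.1, sub_self, norm_zero]
    exact mul_nonneg S.beta_nonneg (scale_pos k).le
  · have hr := scale_pos k
    have hz' : ‖z - p‖ ≤ 40 * scale k := by linarith
    have h2 := norm_sig_sub_le hp hz'
    have h3 := h p hp hz'
    have h4 : S.A k p + 91 * S.a k p ≤ S.β := by
      linarith [S.a_le_A' k p, S.A_le_b k p, S.b_le k hp, S.A_nonneg k p]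
    linarith [mul_le_mul_of_nonneg_right h4 hr.le]

/-- The surface is flat near the points of `E`. -/
lemma norm_N_f_le (hx : x ∈ S.U) (hp : p ∈ S.E) (h : ‖S.f k x - p‖ ≤ 40 * scale k) :
    ‖S.N p k (S.f k x - p)‖ ≤ S.A k p * scale k := by
  induction k generalizing p with
  | zero =>
    have hr := scale_pos 0
    rw [f_zero] at h ⊢
    have h1 := S.norm_T_zero_sub_le hp (x - p)
    have h2 := S.init_dist p hp
    have e : S.N p 0 (x - p) = -(S.T p 0 (x - p) - S.U.starProjection (x - p)) -
        S.Uᗮ.starProjection p := by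
      rw [N_apply, Submodule.starProjection_orthogonal_val, map_sub S.U.starProjection,
        Submodule.starProjection_eq_self_iff.2 hx]
      abel
    rw [e]
    refine (norm_sub_le _ _).trans ?_
    rw [norm_neg]
    have h3 := mul_le_mul_of_nonneg_left h (S.a_nonneg 0 p)
    have h4 := mul_le_mul_of_nonneg_right (S.a_le_A' 0 p) hr.le
    have h5 := mul_nonneg (S.a_nonneg 0 p) hr.le
    linarith
  | succ k ih =>
    have hr := scale_pos k
    rw [scale_succ] at h ⊢
    have h0 := norm_sig_sub_self_le (k := k) fun p hp hz => ih hp hz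
    rw [← f_succ] at h0
    have h1 : ‖S.f k x - p‖ ≤ 5 * scale k := by
      have e := norm_sub_le (S.f (k + 1) x - p) (S.f (k + 1) x - S.f k x)
      rw [sub_sub_sub_cancel_left] at e
      have := mul_le_mul_of_nonneg_right S.beta_le hr.le
      linarith
    have h2 := (S.weights k).sum_eq p hp _ h1
    have h3 := norm_N_sig_le hp (by linarith) h2
    rw [← f_succ] at h3
    have h4 := S.norm_N_succ_le k hp (S.f (k + 1) x - p)
    have h5 := mul_le_mul_of_nonneg_left h (S.a_nonneg (k + 1) p)
    have hΛ : ∀ i, S.a i p ≤ S.Λ * S.a i p := fun i => by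
      linarith [mul_nonneg (sub_nonneg.2 S.one_le) (S.a_nonneg i p)]
    have h6 : 91 * S.a k p + 4 * S.a (k + 1) p ≤ S.A (k + 1) p / 10 := by
      simp only [A]
      linarith [hΛ k, hΛ (k + 1), S.a_nonneg k p, S.a_nonneg (k + 1) p]
    linarith [mul_le_mul_of_nonneg_right h6 hr.le]

lemma norm_f_succ_sub_le (k : ℕ) (hx : x ∈ S.U) :
    ‖S.f (k + 1) x - S.f k x‖ ≤ S.β * scale k :=
  norm_sig_sub_self_le fun _ hp hz => norm_N_f_le hx hp hz

lemma norm_f_sub_le {m : ℕ} (hx : x ∈ S.U) (hmk : m ≤ k) :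
    ‖S.f k x - S.f m x‖ ≤ scale m - scale k := by
  induction k, hmk using Nat.le_induction with
  | base => simp
  | succ k _ ih =>
    have h1 := norm_add_le (S.f (k + 1) x - S.f k x) (S.f k x - S.f m x)
    rw [sub_add_sub_cancel] at h1
    have h2 := norm_f_succ_sub_le k hx
    have h3 := mul_le_mul_of_nonneg_right S.beta_le (scale_pos k).le
    have := scale_pos k
    rw [scale_succ]
    linarith

lemma norm_f_sub_base_le {m : ℕ} (hx : x ∈ S.U) (hmk : m ≤ k)
    (h : ‖S.f k x - p‖ ≤ 11 * scale k) : ‖S.f m x - p‖ ≤ 40 * scale m := by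
  have h1 := norm_f_sub_le hx hmk
  have h2 := norm_sub_le (S.f k x - p) (S.f k x - S.f m x)
  rw [sub_sub_sub_cancel_left] at h2
  have h3 : scale k ≤ scale m :=
    pow_le_pow_of_le_one (by norm_num) (by norm_num) (by omega)
  linarith [scale_pos k]

lemma sum_theta_eq_one (hx : x ∈ S.U) (hp : p ∈ S.E)
    (h : ‖S.f (k + 1) x - p‖ ≤ 40 * scale (k + 1)) :
    ‖S.f k x - p‖ ≤ 40 * scale k ∧ ∑ j ∈ S.J k, S.θ k j (S.f k x) = 1 := by
  have hr := scale_pos k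
  rw [scale_succ] at h
  have h1 : ‖S.f k x - p‖ ≤ 5 * scale k := by
    have e := norm_sub_le (S.f (k + 1) x - p) (S.f (k + 1) x - S.f k x)
    rw [sub_sub_sub_cancel_left] at e
    have := mul_le_mul_of_nonneg_right S.beta_le hr.le
    linarith [norm_f_succ_sub_le k hx]
  exact ⟨by linarith, (S.weights k).sum_eq p hp _ h1⟩

/-- A step moves chords by a relatively small amount, as soon as they are almost tangent. -/
lemma norm_disp_le_b {z z' : V n} (hp : p ∈ S.E) (hz : ‖z - p‖ ≤ 40 * scale k)
    (hz' : ‖z' - p‖ ≤ 40 * scale k) (h1 : ‖S.N p k (z' - p)‖ ≤ S.A k p * scale k)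
    (h2 : ‖S.N p k (z - z')‖ ≤ S.A k p * ‖z - z'‖) :
    ‖(z - S.sig k z) - (z' - S.sig k z')‖ ≤ S.b k p * ‖z - z'‖ ∧
    ‖S.T p k ((z - S.sig k z) - (z' - S.sig k z'))‖ ≤ S.a k p * (S.b k p * ‖z - z'‖) := by
  have hr := scale_pos k
  have hD := norm_nonneg (z - z')
  have key : (‖S.N p k (z - z')‖ + S.a k p * ‖z - z'‖) + S.Λ / scale k * ‖z - z'‖ *
        (‖S.N p k (z' - p)‖ + 91 * S.a k p * scale k) ≤ S.b k p * ‖z - z'‖ := by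
    have hΛ := S.one_le
    have e : S.Λ / scale k * ‖z - z'‖ * (‖S.N p k (z' - p)‖ + 91 * S.a k p * scale k)
        ≤ S.Λ / scale k * ‖z - z'‖ * ((S.A k p + 91 * S.a k p) * scale k) := by
      have : 0 ≤ S.Λ / scale k * ‖z - z'‖ := by positivity
      exact mul_le_mul_of_nonneg_left (by linarith) this
    have e2 : S.Λ / scale k * ‖z - z'‖ * ((S.A k p + 91 * S.a k p) * scale k)
        = S.Λ * (S.A k p + 91 * S.a k p) * ‖z - z'‖ := by field_simp
    have h3 : S.A k p + S.a k p + S.Λ * (S.A k p + 91 * S.a k p) ≤ S.b k p := by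
      have h4 := S.a_le_A k p
      have h5 := S.A_le_b k p
      have h6 := S.a_le_A' k p
      have h7 := S.A_nonneg k p
      have h8 : S.Λ * S.A k p = S.b k p / 3 := by unfold b; ring
      rw [mul_add, h8]
      linarith
    linarith [mul_le_mul_of_nonneg_right h3 hD]
  exact ⟨(norm_disp_le hp hz hz').trans key, (norm_T_disp_le hp hz hz').trans
    (mul_le_mul_of_nonneg_left key (S.a_nonneg k p))⟩

/-- Chords of the surface are almost tangent near the points of `E`. -/
lemma norm_N_chord_le (hx : x ∈ S.U) (hx' : x' ∈ S.U) (hp : p ∈ S.E)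
    (h : ‖S.f k x - p‖ ≤ 40 * scale k) (h' : ‖S.f k x' - p‖ ≤ 40 * scale k) :
    ‖S.N p k (S.f k x - S.f k x')‖ ≤ S.A k p * ‖S.f k x - S.f k x'‖ := by
  induction k generalizing p with
  | zero =>
    refine (S.norm_N_zero_le hp (S.U.sub_mem hx hx')).trans ?_
    exact mul_le_mul_of_nonneg_right (by linarith [S.a_le_A' 0 p, S.a_nonneg 0 p])
      (norm_nonneg _)
  | succ k ih =>
    obtain ⟨hz, h1⟩ := sum_theta_eq_one hx hp h
    obtain ⟨hz', h1'⟩ := sum_theta_eq_one hx' hp h'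
    have h2 := norm_N_sig_sub_sig_le hp hz hz' h1 h1'
    rw [← f_succ, ← f_succ] at h2
    have h3 := S.norm_N_succ_le k hp (S.f (k + 1) x - S.f (k + 1) x')
    have h4 := (norm_disp_le_b hp hz hz' (norm_N_f_le hx' hp hz') (ih hp hz hz')).1
    rw [← f_succ, ← f_succ] at h4
    set δ := S.f k x - S.f k x'
    set δ' := S.f (k + 1) x - S.f (k + 1) x'
    have h5 : ‖δ‖ ≤ 2 * ‖δ'‖ := by
      have e : S.f k x - S.f (k + 1) x - (S.f k x' - S.f (k + 1) x') = δ - δ' := by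
        simp only [δ, δ']; abel
      rw [e] at h4
      have h6 := norm_sub_norm_le δ δ'
      have h7 : S.b k p ≤ 1 / 2 := by linarith [S.b_le k hp, S.beta_le]
      have := mul_le_mul_of_nonneg_right h7 (norm_nonneg δ)
      linarith
    have ha := S.a_nonneg k p
    have hΛ := S.one_le
    have h6 := mul_le_mul_of_nonneg_left h5 (by positivity : 0 ≤ 92 * S.Λ * S.a k p)
    have h7 : 184 * S.Λ * S.a k p + S.a (k + 1) p ≤ S.A (k + 1) p := by
      simp only [A]
      have e1 := mul_nonneg (sub_nonneg.2 hΛ) (S.a_nonneg (k + 1) p)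
      have e2 := mul_nonneg (sub_nonneg.2 hΛ) ha
      have e3 := S.a_nonneg (k + 1) p
      linarith
    linarith [mul_le_mul_of_nonneg_right h7 (norm_nonneg δ')]

lemma norm_tau_le_b {z v : V n} (hp : p ∈ S.E) (hz : ‖z - p‖ ≤ 40 * scale k)
    (h : ‖S.T p k v‖ ≤ S.A k p * ‖v‖) :
    ‖S.tau k z v‖ ≤ S.b k p * ‖v‖ ∧
    S.Λ * (‖S.T p k v‖ + S.a k p * ‖v‖) ≤ S.b k p * ‖v‖ := by
  have hΛ := S.one_le
  have h1 : S.Λ * (S.A k p + S.a k p) ≤ S.b k p := by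
    have h2 : S.Λ * S.A k p = S.b k p / 3 := by unfold b; ring
    rw [mul_add, h2]
    linarith [S.a_le_A k p, S.A_le_b k p, S.b_nonneg k p, S.A_nonneg k p]
  have h2 : S.Λ * (‖S.T p k v‖ + S.a k p * ‖v‖) ≤ S.b k p * ‖v‖ := by
    have := mul_le_mul_of_nonneg_right h1 (norm_nonneg v)
    have := mul_le_mul_of_nonneg_left h (by linarith : 0 ≤ S.Λ)
    linarith
  refine ⟨(norm_tau_le hp hz v).trans (le_trans ?_ h2), h2⟩
  exact le_mul_of_one_le_left
    (add_nonneg (norm_nonneg _) (mul_nonneg (S.a_nonneg k p) (norm_nonneg v))) hΛ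

/-- The transported normal vectors are almost normal near the points of `E`. -/
lemma norm_T_L_le (hx : x ∈ S.U) (hy : y ∈ S.Uᗮ) (hp : p ∈ S.E)
    (h : ‖S.f k x - p‖ ≤ 40 * scale k) :
    ‖S.T p k (S.L k x y)‖ ≤ S.A k p * ‖S.L k x y‖ := by
  induction k generalizing p with
  | zero =>
    refine (S.norm_T_zero_le hp hy).trans ?_
    exact mul_le_mul_of_nonneg_right (by linarith [S.a_le_A' 0 p, S.a_nonneg 0 p])
      (norm_nonneg _)
  | succ k ih =>
    obtain ⟨hz, h1⟩ := sum_theta_eq_one hx hp h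
    have h2 := norm_T_sub_tau_le hp hz h1 (S.L k x y)
    rw [← L_succ] at h2
    have h3 := S.norm_T_succ_le k hp (S.L (k + 1) x y)
    have h4 := (norm_tau_le_b hp hz (ih hp hz)).1
    have h5 : ‖S.L k x y‖ ≤ 2 * ‖S.L (k + 1) x y‖ := by
      have h6 := norm_sub_norm_le (S.L k x y) (S.tau k (S.f k x) (S.L k x y))
      rw [← L_succ] at h6
      have h7 : S.b k p ≤ 1 / 2 := by linarith [S.b_le k hp, S.beta_le]
      have := mul_le_mul_of_nonneg_right h7 (norm_nonneg (S.L k x y))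
      linarith
    have ha := S.a_nonneg k p
    have hΛ := S.one_le
    have h6 := mul_le_mul_of_nonneg_left h5 ha
    have h7 : 2 * S.a k p + S.a (k + 1) p ≤ S.A (k + 1) p := by
      simp only [A]
      have e1 := mul_nonneg (sub_nonneg.2 hΛ) (S.a_nonneg (k + 1) p)
      have e2 := mul_nonneg (sub_nonneg.2 hΛ) ha
      have e3 := S.a_nonneg (k + 1) p
      linarith
    linarith [mul_le_mul_of_nonneg_right h7 (norm_nonneg (S.L (k + 1) x y))]

lemma le_exp_sum_mul {s t : ℕ → ℝ} (hs : ∀ m, 0 ≤ s m) {K : ℕ}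
    (h : ∀ m < K, s (m + 1) ≤ (1 + t m) * s m) :
    s K ≤ Real.exp (∑ m ∈ Finset.range K, t m) * s 0 := by
  induction K with
  | zero => simp
  | succ K ih =>
    rw [Finset.sum_range_succ, Real.exp_add, mul_right_comm, mul_comm]
    refine (h K K.lt_succ_self).trans (mul_le_mul (by linarith [Real.add_one_le_exp (t K)])
      (ih fun m hm => h m (hm.trans K.lt_succ_self)) (hs K) (Real.exp_pos _).le)

lemma exp_neg_sum_mul_le {s t : ℕ → ℝ} (hs : ∀ m, 0 ≤ s m) {K : ℕ} (ht : ∀ m, 0 ≤ t m)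
    (ht' : ∀ m, t m ≤ 1 / 2) (h : ∀ m < K, (1 - t m) * s m ≤ s (m + 1)) :
    s 0 ≤ Real.exp (∑ m ∈ Finset.range K, 2 * t m) * s K := by
  induction K with
  | zero => simp
  | succ K ih =>
    have h1 := ih fun m hm => h m (hm.trans K.lt_succ_self)
    have h2 := h K K.lt_succ_self
    have h3 : s K ≤ Real.exp (2 * t K) * s (K + 1) := by
      have e1 : 1 ≤ Real.exp (2 * t K) * (1 - t K) := by
        have := Real.add_one_le_exp (2 * t K)
        nlinarith [ht K, ht' K]
      have e2 := mul_le_mul_of_nonneg_left h2 (Real.exp_pos (2 * t K)).le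
      nlinarith [hs K]
    rw [Finset.sum_range_succ, Real.exp_add, mul_assoc]
    exact h1.trans (mul_le_mul_of_nonneg_left h3 (Real.exp_pos _).le)

lemma le_mul_of_sq_le_exp {u v t : ℝ} (hv : 0 ≤ v)
    (h : u ^ 2 ≤ Real.exp (2 * t) * v ^ 2) : u ≤ Real.exp t * v := by
  have e : Real.exp (2 * t) * v ^ 2 = (Real.exp t * v) ^ 2 := by
    rw [mul_pow, ← Real.exp_nat_mul]; norm_num
  rw [e] at h
  exact le_of_sq_le_sq h (mul_nonneg (Real.exp_pos t).le hv)

lemma near_disp (hx : x ∈ S.U) (hx' : x' ∈ S.U) (hp : p ∈ S.E)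
    (h : ‖S.f k x - p‖ ≤ 40 * scale k) (h' : ‖S.f k x' - p‖ ≤ 40 * scale k) :
    ‖(S.f k x - S.f k x') - (S.f (k + 1) x - S.f (k + 1) x')‖ ≤
      S.b k p * ‖S.f k x - S.f k x'‖ ∧
    |‖S.f (k + 1) x - S.f (k + 1) x'‖ ^ 2 - ‖S.f k x - S.f k x'‖ ^ 2| ≤
      5 * S.b k p ^ 2 * ‖S.f k x - S.f k x'‖ ^ 2 := by
  have hN := norm_N_chord_le hx hx' hp h h'
  obtain ⟨h1, h2⟩ := norm_disp_le_b hp h h' (norm_N_f_le hx' hp h') hN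
  rw [← f_succ, ← f_succ, sub_sub_sub_comm] at h1 h2
  set δ := S.f k x - S.f k x'
  set δ' := S.f (k + 1) x - S.f (k + 1) x'
  refine ⟨h1, ?_⟩
  have e : δ' = δ - (δ - δ') := by abel
  have hi : inner ℝ δ (δ - δ') =
      inner ℝ δ (S.T p k (δ - δ')) + inner ℝ (S.N p k δ) (δ - δ') := by
    rw [inner_N, ← inner_add_right, add_comm, N_add_T]
  have hb := S.b_nonneg k p
  have hD := norm_nonneg δ
  have hbD := mul_nonneg hb hD
  have i1 : |inner ℝ δ (S.T p k (δ - δ'))| ≤ S.b k p ^ 2 * ‖δ‖ ^ 2 := by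
    refine (abs_real_inner_le_norm _ _).trans ?_
    have ha : S.a k p ≤ S.b k p := by
      linarith [S.a_le_A' k p, S.A_le_b k p, S.A_nonneg k p, S.a_nonneg k p]
    have e2 := h2.trans (mul_le_mul_of_nonneg_right ha hbD)
    linarith [mul_le_mul_of_nonneg_left e2 hD]
  have i2 : |inner ℝ (S.N p k δ) (δ - δ')| ≤ S.b k p ^ 2 * ‖δ‖ ^ 2 := by
    refine (abs_real_inner_le_norm _ _).trans ?_
    have hA : S.A k p ≤ S.b k p := by linarith [S.A_le_b k p, S.A_nonneg k p]
    have e2 := hN.trans (mul_le_mul_of_nonneg_right hA hD)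
    linarith [mul_le_mul e2 h1 (norm_nonneg _) hbD]
  have i3 : ‖δ - δ'‖ ^ 2 ≤ S.b k p ^ 2 * ‖δ‖ ^ 2 := by
    rw [← mul_pow]; exact pow_le_pow_left₀ (norm_nonneg _) h1 2
  have e3 : ‖δ'‖ ^ 2 - ‖δ‖ ^ 2 = -2 * inner ℝ δ (δ - δ') + ‖δ - δ'‖ ^ 2 := by
    conv_lhs => rw [e, norm_sub_sq_real]
    ring
  rw [e3, hi]
  rw [abs_le] at *
  constructor <;> linarith [sq_nonneg ‖δ - δ'‖, i1.1, i1.2, i2.1, i2.2]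

lemma step_cases (hD : ‖S.f k x - S.f k x'‖ ≤ scale k) :
    ((S.f (k + 1) x = S.f k x ∧ S.tau k (S.f k x) = 0) ∧
      (S.f (k + 1) x' = S.f k x' ∧ S.tau k (S.f k x') = 0)) ∨
    ∃ p ∈ S.E, ‖S.f k x - p‖ ≤ 11 * scale k ∧ ‖S.f k x' - p‖ ≤ 11 * scale k := by
  have hr := scale_pos k
  rcases S.sig_tau_or_near k (S.f k x) with h | ⟨p, hp, hz⟩
  · rcases S.sig_tau_or_near k (S.f k x') with h' | ⟨p, hp, hz⟩
    · exact Or.inl ⟨h, h'⟩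
    · refine Or.inr ⟨p, hp, ?_, by linarith⟩
      have := norm_add_le (S.f k x - S.f k x') (S.f k x' - p)
      rw [sub_add_sub_cancel] at this
      linarith
  · refine Or.inr ⟨p, hp, by linarith, ?_⟩
    have := norm_sub_le (S.f k x - p) (S.f k x - S.f k x')
    rw [sub_sub_sub_cancel_left] at this
    linarith

lemma norm_chord_sub_le (hx : x ∈ S.U) (hx' : x' ∈ S.U)
    (hD : ‖S.f k x - S.f k x'‖ ≤ scale k) :
    ‖(S.f k x - S.f k x') - (S.f (k + 1) x - S.f (k + 1) x')‖ ≤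
      S.β * ‖S.f k x - S.f k x'‖ := by
  have hr := scale_pos k
  rcases step_cases hD with ⟨h, h'⟩ | ⟨p, hp, h, h'⟩
  · rw [h.1, h'.1, sub_self, norm_zero]
    exact mul_nonneg S.beta_nonneg (norm_nonneg _)
  · exact (near_disp hx hx' hp (by linarith) (by linarith)).1.trans
      (mul_le_mul_of_nonneg_right (S.b_le k hp) (norm_nonneg _))

lemma norm_tau_L_le (hx : x ∈ S.U) (hy : y ∈ S.Uᗮ) :
    ‖S.tau k (S.f k x) (S.L k x y)‖ ≤ S.β * ‖S.L k x y‖ := by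
  rcases S.sig_tau_or_near k (S.f k x) with h | ⟨p, hp, hz⟩
  · rw [h.2]
    simpa using mul_nonneg S.beta_nonneg (norm_nonneg _)
  · have h40 : ‖S.f k x - p‖ ≤ 40 * scale k := by linarith [scale_pos k]
    exact (norm_tau_le_b hp h40 (norm_T_L_le hx hy hp h40)).1.trans
      (mul_le_mul_of_nonneg_right (S.b_le k hp) (norm_nonneg _))

lemma norm_L_succ_le (x y : V n) : ‖S.L (k + 1) x y‖ ≤ ‖S.L k x y‖ :=
  norm_sub_tau_le _ _

lemma norm_L_le_succ (hx : x ∈ S.U) (hy : y ∈ S.Uᗮ) :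
    ‖S.L k x y‖ ≤ 11 / 10 * ‖S.L (k + 1) x y‖ := by
  have h := norm_tau_L_le (k := k) hx hy
  have h1 := norm_sub_norm_le (S.L k x y) (S.tau k (S.f k x) (S.L k x y))
  rw [← L_succ] at h1
  have h2 := mul_le_mul_of_nonneg_right S.beta_le (norm_nonneg (S.L k x y))
  linarith [norm_nonneg (S.L k x y)]

lemma norm_L_le (x y : V n) : ‖S.L k x y‖ ≤ ‖y‖ := by
  induction k with
  | zero => rfl
  | succ k ih => exact (norm_L_succ_le x y).trans ih

lemma chord_le_succ (hx : x ∈ S.U) (hx' : x' ∈ S.U)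
    (hD : ‖S.f k x - S.f k x'‖ ≤ scale k) :
    ‖S.f k x - S.f k x'‖ ≤ 11 / 10 * ‖S.f (k + 1) x - S.f (k + 1) x'‖ := by
  have h := norm_chord_sub_le hx hx' hD
  have h1 := norm_sub_norm_le (S.f k x - S.f k x') (S.f (k + 1) x - S.f (k + 1) x')
  have h2 := mul_le_mul_of_nonneg_right S.beta_le (norm_nonneg (S.f k x - S.f k x'))
  linarith [norm_nonneg (S.f k x - S.f k x')]

lemma chord_le_scale_of_succ (hx : x ∈ S.U) (hx' : x' ∈ S.U)
    (hD : ‖S.f (k + 1) x - S.f (k + 1) x'‖ ≤ scale (k + 1)) :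
    ‖S.f k x - S.f k x'‖ ≤ scale k := by
  have h := norm_f_succ_sub_le k hx
  have h' := norm_f_succ_sub_le k hx'
  have e : S.f k x - S.f k x' = (S.f (k + 1) x - S.f (k + 1) x') -
      ((S.f (k + 1) x - S.f k x) - (S.f (k + 1) x' - S.f k x')) := by abel
  have h1 := norm_sub_le (S.f (k + 1) x - S.f (k + 1) x')
    ((S.f (k + 1) x - S.f k x) - (S.f (k + 1) x' - S.f k x'))
  rw [← e] at h1
  have h2 := norm_sub_le (S.f (k + 1) x - S.f k x) (S.f (k + 1) x' - S.f k x')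
  have h3 := mul_le_mul_of_nonneg_right S.beta_le (scale_pos k).le
  rw [scale_succ] at hD
  linarith [scale_pos k]

lemma norm_tau_sub_tau_L_le (hx : x ∈ S.U) (hy : y ∈ S.Uᗮ)
    (hD : ‖S.f k x - S.f k x'‖ ≤ scale k) :
    scale k * ‖S.tau k (S.f k x) (S.L k x y) - S.tau k (S.f k x') (S.L k x y)‖ ≤
      S.β * ‖S.f k x - S.f k x'‖ * ‖S.L k x y‖ := by
  have hr := scale_pos k
  have hβ := S.beta_nonneg
  rcases step_cases hD with ⟨h, h'⟩ | ⟨p, hp, h, h'⟩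
  · rw [h.2, h'.2, sub_self, norm_zero, mul_zero]
    positivity
  · have h40 : ‖S.f k x - p‖ ≤ 40 * scale k := by linarith
    have t1 := norm_tau_sub_tau_le hp h40 (by linarith : ‖S.f k x' - p‖ ≤ 40 * scale k)
      (S.L k x y)
    have t2 := (norm_tau_le_b hp h40 (norm_T_L_le hx hy hp h40)).2
    have t3 := t2.trans (mul_le_mul_of_nonneg_right (S.b_le k hp) (norm_nonneg _))
    have t4 := mul_le_mul_of_nonneg_left t3 (norm_nonneg (S.f k x - S.f k x'))
    refine (mul_le_mul_of_nonneg_left t1 hr.le).trans ?_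
    have e : scale k * (S.Λ / scale k * ‖S.f k x - S.f k x'‖ *
        (‖S.T p k (S.L k x y)‖ + S.a k p * ‖S.L k x y‖)) = ‖S.f k x - S.f k x'‖ *
        (S.Λ * (‖S.T p k (S.L k x y)‖ + S.a k p * ‖S.L k x y‖)) := by field_simp
    rw [e]
    linarith

/-- The transported normal vectors depend on the base point in a Lipschitz way. -/
lemma norm_L_sub_L_le (hx : x ∈ S.U) (hx' : x' ∈ S.U) (hy : y ∈ S.Uᗮ)
    (hD : ‖S.f k x - S.f k x'‖ ≤ scale k) :
    scale k * ‖S.L k x y - S.L k x' y‖ ≤ S.β * ‖S.f k x - S.f k x'‖ * ‖S.L k x y‖ := by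
  induction k with
  | zero =>
    simp only [L_zero, sub_self, norm_zero, mul_zero]
    exact mul_nonneg (mul_nonneg S.beta_nonneg (norm_nonneg _)) (norm_nonneg _)
  | succ k ih =>
    have hD0 := chord_le_scale_of_succ hx hx' hD
    have hr := scale_pos k
    have hβ := S.beta_nonneg
    have ih := ih hD0
    have c1 := chord_le_succ hx hx' hD0
    have c2 := norm_L_le_succ (k := k) hx hy
    have key := norm_tau_sub_tau_L_le hx hy hD0
    have e : S.L (k + 1) x y - S.L (k + 1) x' y =
        ((S.L k x y - S.L k x' y) - S.tau k (S.f k x') (S.L k x y - S.L k x' y)) -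
        (S.tau k (S.f k x) (S.L k x y) - S.tau k (S.f k x') (S.L k x y)) := by
      rw [L_succ, L_succ, map_sub]; abel
    have h1 : ‖S.L (k + 1) x y - S.L (k + 1) x' y‖ ≤ ‖S.L k x y - S.L k x' y‖ +
        ‖S.tau k (S.f k x) (S.L k x y) - S.tau k (S.f k x') (S.L k x y)‖ := by
      rw [e]
      exact (norm_sub_le _ _).trans (add_le_add_left (norm_sub_tau_le _ _) _)
    have h2 := mul_le_mul_of_nonneg_left h1 hr.le
    have h3 := mul_le_mul c1 c2 (norm_nonneg _)
      (mul_nonneg (by norm_num) (norm_nonneg (S.f (k + 1) x - S.f (k + 1) x')))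
    have h4 := mul_le_mul_of_nonneg_left h3 hβ
    have h5 := mul_nonneg hβ (mul_nonneg (norm_nonneg (S.f (k + 1) x - S.f (k + 1) x'))
      (norm_nonneg (S.L (k + 1) x y)))
    rw [scale_succ]
    linarith

/-- Transported normal vectors are almost orthogonal to short chords. -/
lemma abs_inner_chord_L_le (hx : x ∈ S.U) (hx' : x' ∈ S.U) (hy : y ∈ S.Uᗮ)
    (hD : ‖S.f k x - S.f k x'‖ ≤ scale k) :
    |inner ℝ (S.f k x - S.f k x') (S.L k x y)| ≤
      4 * S.β * (‖S.f k x - S.f k x'‖ * ‖S.L k x y‖) := by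
  induction k with
  | zero =>
    rw [f_zero, f_zero, L_zero, hy _ (S.U.sub_mem hx hx'), abs_zero]
    have := S.beta_nonneg
    positivity
  | succ k ih =>
    have hD0 := chord_le_scale_of_succ hx hx' hD
    have hr := scale_pos k
    have hβ := S.beta_nonneg
    rcases step_cases hD0 with ⟨h, h'⟩ | ⟨p, hp, h, h'⟩
    · rw [L_succ, h.1, h'.1, h.2]
      simpa using ih hD0
    · have h40 : ‖S.f k x - p‖ ≤ 40 * scale k := by linarith
      have h40' : ‖S.f k x' - p‖ ≤ 40 * scale k := by linarith
      have c1 := chord_le_succ hx hx' hD0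
      have c2 := norm_L_le_succ (k := k) hx hy
      have hN := norm_N_chord_le hx hx' hp h40 h40'
      have hT := norm_T_L_le hx hy hp h40
      have u1 := norm_chord_sub_le hx hx' hD0
      have u2 := norm_tau_L_le (k := k) hx hy
      have u3 : ‖S.L (k + 1) x y‖ ≤ ‖S.L k x y‖ := norm_L_succ_le x y
      have e0 : S.L k x y - S.L (k + 1) x y = S.tau k (S.f k x) (S.L k x y) := by
        rw [L_succ]; abel
      rw [← e0] at u2
      set δ := S.f k x - S.f k x'
      set δ' := S.f (k + 1) x - S.f (k + 1) x'
      set l := S.L k x y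
      set l' := S.L (k + 1) x y
      have hA : 3 * S.A k p ≤ S.β := (S.A_le_b k p).trans (S.b_le k hp)
      have hA0 := S.A_nonneg k p
      have e : inner ℝ δ' l' = inner ℝ δ (S.T p k l) + inner ℝ (S.N p k δ) l -
          inner ℝ δ (l - l') - inner ℝ (δ - δ') l' := by
        rw [inner_N, ← inner_add_right, add_comm (S.T p k l), N_add_T, inner_sub_right,
          inner_sub_left δ δ' l']
        ring
      have hP : 0 ≤ ‖δ‖ * ‖l‖ := by positivity
      have i1 : |inner ℝ δ (S.T p k l)| ≤ S.A k p * (‖δ‖ * ‖l‖) :=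
        (abs_real_inner_le_norm _ _).trans (by
          linarith [mul_le_mul_of_nonneg_left hT (norm_nonneg δ)])
      have i2 : |inner ℝ (S.N p k δ) l| ≤ S.A k p * (‖δ‖ * ‖l‖) :=
        (abs_real_inner_le_norm _ _).trans (by
          linarith [mul_le_mul_of_nonneg_right hN (norm_nonneg l)])
      have i3 : |inner ℝ δ (l - l')| ≤ S.β * (‖δ‖ * ‖l‖) :=
        (abs_real_inner_le_norm _ _).trans (by
          linarith [mul_le_mul_of_nonneg_left u2 (norm_nonneg δ)])
      have i4 : |inner ℝ (δ - δ') l'| ≤ S.β * (‖δ‖ * ‖l‖) :=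
        (abs_real_inner_le_norm _ _).trans (by
          linarith [mul_le_mul u1 u3 (norm_nonneg _) (mul_nonneg hβ (norm_nonneg δ))])
      have h3 := mul_le_mul_of_nonneg_left (mul_le_mul c1 c2 (norm_nonneg _)
        (mul_nonneg (by norm_num) (norm_nonneg δ'))) hβ
      have h4 := mul_le_mul_of_nonneg_right hA hP
      have h5 := mul_nonneg hβ (mul_nonneg (norm_nonneg δ') (norm_nonneg l'))
      rw [e]
      rw [abs_le] at *
      constructor <;> linarith [i1.1, i1.2, i2.1, i2.2, i3.1, i3.2, i4.1, i4.2]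

variable (S) in
/-- The bi-Lipschitz constant of the surfaces. -/
def κ : ℝ := Real.exp (5 * (144000000 * S.Λ ^ 4 * S.M))

lemma kappa_exponent_nonneg : 0 ≤ 144000000 * S.Λ ^ 4 * S.M := by
  have := S.M_nonneg
  positivity

lemma one_le_kappa : 1 ≤ S.κ :=
  Real.one_le_exp (by linarith [kappa_exponent_nonneg (S := S)])

lemma b_sq_le (k : ℕ) (hp : p ∈ S.E) : 5 * S.b k p ^ 2 ≤ 1 / 2 := by
  have := S.b_le k hp
  have h1 := S.beta_le
  nlinarith [S.b_nonneg k p]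

lemma norm_le_norm_L (hx : x ∈ S.U) (hy : y ∈ S.Uᗮ) : ‖y‖ ≤ S.κ * ‖S.L k x y‖ := by
  induction k with
  | zero => exact le_mul_of_one_le_left (norm_nonneg _) one_le_kappa
  | succ k ih =>
    rcases S.sig_tau_or_near k (S.f k x) with h | ⟨p, hp, hz⟩
    · rw [L_succ, h.2]
      simpa using ih
    have hr := scale_pos k
    have h1 : ∀ m < k + 1, (1 - 2 * S.b m p ^ 2) * ‖S.L m x y‖ ^ 2 ≤ ‖S.L (m + 1) x y‖ ^ 2 := by
      intro m hm
      have h40 := norm_f_sub_base_le hx (Nat.lt_succ_iff.1 hm) (by linarith)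
      have e1 := norm_sub_tau_sq_ge hp h40 (S.L m x y)
      have e2 : ‖S.T p m (S.L m x y)‖ + S.a m p * ‖S.L m x y‖ ≤ S.b m p * ‖S.L m x y‖ := by
        have e3 : S.A m p + S.a m p ≤ S.b m p := by
          linarith [S.a_le_A' m p, S.A_le_b m p, S.A_nonneg m p, S.a_nonneg m p]
        linarith [norm_T_L_le hx hy hp h40,
          mul_le_mul_of_nonneg_right e3 (norm_nonneg (S.L m x y))]
      have e3 := pow_le_pow_left₀
        (add_nonneg (norm_nonneg _) (mul_nonneg (S.a_nonneg m p) (norm_nonneg _))) e2 2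
      rw [← L_succ] at e1
      linarith
    have h2 := exp_neg_sum_mul_le (s := fun m => ‖S.L m x y‖ ^ 2) (fun m => sq_nonneg _)
      (fun m => by positivity)
      (fun m => by linarith [b_sq_le m hp, sq_nonneg (S.b m p)]) h1
    refine le_mul_of_sq_le_exp (norm_nonneg _)
      (h2.trans (mul_le_mul_of_nonneg_right ?_ (sq_nonneg _)))
    rw [Real.exp_le_exp, ← Finset.mul_sum, ← Finset.mul_sum]
    linarith [S.sum_b_le hp (k + 1), kappa_exponent_nonneg (S := S)]

/-- The surfaces are uniformly bi-Lipschitz at small scales. -/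
lemma chord_bounds (hx : x ∈ S.U) (hx' : x' ∈ S.U)
    (hD : ‖S.f k x - S.f k x'‖ ≤ scale k) :
    ‖x - x'‖ ≤ S.κ * ‖S.f k x - S.f k x'‖ ∧ ‖S.f k x - S.f k x'‖ ≤ S.κ * ‖x - x'‖ := by
  induction k with
  | zero => exact ⟨le_mul_of_one_le_left (norm_nonneg _) one_le_kappa,
      le_mul_of_one_le_left (norm_nonneg _) one_le_kappa⟩
  | succ k ih =>
    have hD0 := chord_le_scale_of_succ hx hx' hD
    rcases step_cases hD0 with ⟨h, h'⟩ | ⟨p, hp, h, h'⟩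
    · rw [h.1, h'.1]
      exact ih hD0
    have h1 : ∀ m < k + 1,
        |‖S.f (m + 1) x - S.f (m + 1) x'‖ ^ 2 - ‖S.f m x - S.f m x'‖ ^ 2| ≤
        5 * S.b m p ^ 2 * ‖S.f m x - S.f m x'‖ ^ 2 := fun m hm =>
      (near_disp hx hx' hp (norm_f_sub_base_le hx (Nat.lt_succ_iff.1 hm) h)
        (norm_f_sub_base_le hx' (Nat.lt_succ_iff.1 hm) h')).2
    have hS := S.sum_b_le hp (k + 1)
    have hB := kappa_exponent_nonneg (S := S)
    have h2 := exp_neg_sum_mul_le (s := fun m => ‖S.f m x - S.f m x'‖ ^ 2)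
      (fun m => sq_nonneg _) (fun m => by positivity) (fun m => b_sq_le m hp)
      (fun m hm => by linarith [(abs_le.1 (h1 m hm)).1])
    have h3 := le_exp_sum_mul (s := fun m => ‖S.f m x - S.f m x'‖ ^ 2)
      (t := fun m => 5 * S.b m p ^ 2)
      (fun m => sq_nonneg _) (fun m hm => by linarith [(abs_le.1 (h1 m hm)).2])
    constructor
    · refine le_mul_of_sq_le_exp (norm_nonneg _)
        (h2.trans (mul_le_mul_of_nonneg_right ?_ (sq_nonneg _)))
      rw [Real.exp_le_exp, ← Finset.mul_sum, ← Finset.mul_sum]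
      linarith
    · refine le_mul_of_sq_le_exp (norm_nonneg _)
        (h3.trans (mul_le_mul_of_nonneg_right ?_ (sq_nonneg _)))
      rw [Real.exp_le_exp, ← Finset.mul_sum]
      linarith

variable (S) in
/-- The size of the normal component of `w`, transported to generation `k`. -/
def ν (k : ℕ) (w : V n) : ℝ := ‖S.L k (S.U.starProjection w) (S.Uᗮ.starProjection w)‖

variable (S) in
/-- The image of `w` in the tube around the surface of generation `k`. -/
def tube (k : ℕ) (w : V n) : V n :=
  S.f k (S.U.starProjection w) + S.L k (S.U.starProjection w) (S.Uᗮ.starProjection w)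

variable (S) in
/-- The cutoff restricting step `k` to the tube of radius `scale k`. -/
def cut (k : ℕ) (w : V n) : ℝ := max 0 (min 1 (2 - 2 * (S.ν k w / scale k)))

variable (S) in
/-- The displacement at step `k`. -/
def Δ (k : ℕ) (w : V n) : V n := S.cut k w • (S.tube (k + 1) w - S.tube k w)

variable (S) in
/-- The homeomorphism of generation `k`. -/
def G : ℕ → V n → V n
  | 0, w => w
  | k + 1, w => G k w + S.Δ k w

lemma G_succ (k : ℕ) (w : V n) : S.G (k + 1) w = S.G k w + S.Δ k w := rfl

lemma nu_succ_le (k : ℕ) (w : V n) : S.ν (k + 1) w ≤ S.ν k w := norm_L_succ_le _ _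

lemma nu_le_succ (k : ℕ) (w : V n) : S.ν k w ≤ 11 / 10 * S.ν (k + 1) w :=
  norm_L_le_succ (Submodule.starProjection_apply_mem _ _) (Submodule.starProjection_apply_mem _ _)

lemma cut_nonneg (k : ℕ) (w : V n) : 0 ≤ S.cut k w := le_max_left _ _

lemma cut_le_one (k : ℕ) (w : V n) : S.cut k w ≤ 1 :=
  max_le zero_le_one (min_le_left _ _)

lemma cut_eq_one {w : V n} (h : S.ν k w ≤ scale k / 2) : S.cut k w = 1 := by
  have hr := scale_pos k
  have : S.ν k w / scale k ≤ 1 / 2 := by rw [div_le_iff₀ hr]; linarith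
  rw [cut, min_eq_left (by linarith), max_eq_right zero_le_one]

lemma cut_eq_zero {w : V n} (h : scale k ≤ S.ν k w) : S.cut k w = 0 := by
  have hr := scale_pos k
  have : 1 ≤ S.ν k w / scale k := by rwa [le_div_iff₀ hr, one_mul]
  rw [cut, max_eq_left ((min_le_right _ _).trans (by linarith))]

lemma abs_cut_sub_le (k : ℕ) (w w' : V n) :
    scale k * |S.cut k w - S.cut k w'| ≤ 2 * |S.ν k w - S.ν k w'| := by
  have hr := scale_pos k
  have h1 : |S.cut k w - S.cut k w'| ≤
      |(2 - 2 * (S.ν k w / scale k)) - (2 - 2 * (S.ν k w' / scale k))| := by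
    unfold cut
    refine (abs_max_sub_max_le_max _ _ _ _).trans (max_le (by simp) ?_)
    exact (abs_min_sub_min_le_max _ _ _ _).trans (max_le (by simp) le_rfl)
  have h2 : (2 - 2 * (S.ν k w / scale k)) - (2 - 2 * (S.ν k w' / scale k)) =
      -(2 * (S.ν k w - S.ν k w') / scale k) := by ring
  rw [h2, abs_neg, abs_div, abs_of_pos hr, le_div_iff₀ hr, abs_mul, abs_two] at h1
  linarith

lemma tube_succ_sub (k : ℕ) (w : V n) : S.tube (k + 1) w - S.tube k w =
    (S.f (k + 1) (S.U.starProjection w) - S.f k (S.U.starProjection w)) -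
      S.tau k (S.f k (S.U.starProjection w))
        (S.L k (S.U.starProjection w) (S.Uᗮ.starProjection w)) := by
  rw [tube, tube, L_succ]; abel

lemma norm_tube_succ_sub_le (k : ℕ) (w : V n) :
    ‖S.tube (k + 1) w - S.tube k w‖ ≤ S.β * (scale k + S.ν k w) := by
  rw [tube_succ_sub, mul_add]
  exact (norm_sub_le _ _).trans (add_le_add
    (norm_f_succ_sub_le k (Submodule.starProjection_apply_mem _ _))
    (norm_tau_L_le (Submodule.starProjection_apply_mem _ _)
      (Submodule.starProjection_apply_mem _ _)))

lemma norm_Delta_le (k : ℕ) (w : V n) : ‖S.Δ k w‖ ≤ 2 * S.β * scale k := by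
  have hr := scale_pos k
  have hβ := S.beta_nonneg
  rcases le_total (scale k) (S.ν k w) with h | h
  · rw [Δ, cut_eq_zero h, zero_smul, norm_zero]
    positivity
  · rw [Δ, norm_smul, Real.norm_of_nonneg (cut_nonneg k w)]
    refine (mul_le_of_le_one_left (norm_nonneg _) (cut_le_one k w)).trans
      ((norm_tube_succ_sub_le k w).trans ?_)
    linarith [mul_le_mul_of_nonneg_left h hβ]

lemma norm_G_sub_le {m : ℕ} (w : V n) (hmk : m ≤ k) :
    ‖S.G k w - S.G m w‖ ≤ 4 * S.β * (scale m - scale k) := by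
  induction k, hmk using Nat.le_induction with
  | base => simp
  | succ k _ ih =>
    have h1 := norm_add_le (S.Δ k w) (S.G k w - S.G m w)
    have e : S.Δ k w + (S.G k w - S.G m w) = S.G (k + 1) w - S.G m w := by
      rw [G_succ]; abel
    rw [e] at h1
    have h2 := norm_Delta_le (S := S) k w
    have h3 := mul_nonneg S.beta_nonneg (scale_pos k).le
    rw [scale_succ]
    linarith

lemma G_succ_eq_tube {w : V n} (h : S.G k w = S.tube k w) (hν : S.ν k w ≤ scale k / 2) :
    S.G (k + 1) w = S.tube (k + 1) w := by
  rw [G_succ, Δ, cut_eq_one hν, one_smul, h, add_sub_cancel]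

lemma G_zero_eq_tube (w : V n) : S.G 0 w = S.tube 0 w := by
  rw [tube, f_zero, L_zero, Submodule.starProjection_add_starProjection_orthogonal]
  rfl

lemma scale_le_nu_of_le {m : ℕ} {w : V n} (hmk : m ≤ k) (h : scale m ≤ S.ν m w) :
    scale k ≤ S.ν k w := by
  induction k, hmk using Nat.le_induction with
  | base => exact h
  | succ k _ ih =>
    rw [scale_succ]
    linarith [nu_le_succ (S := S) k w, scale_pos k]

lemma G_eq_of_le {m : ℕ} {w : V n} (hmk : m ≤ k) (h : scale m ≤ S.ν m w) :
    S.G k w = S.G m w := by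
  induction k, hmk using Nat.le_induction with
  | base => rfl
  | succ k hk ih =>
    rw [G_succ, Δ, cut_eq_zero (scale_le_nu_of_le hk h), zero_smul, add_zero, ih]

variable (S) in
/-- Both points have moved freely up to generation `k`, and are close to each other with respect
to the scale. -/
structure Regular (k : ℕ) (w w' : V n) : Prop where
  left : S.G k w = S.tube k w
  right : S.G k w' = S.tube k w'
  chord : ‖S.f k (S.U.starProjection w) - S.f k (S.U.starProjection w')‖ ≤ scale k
  nu_left : S.ν k w ≤ 10 * scale k
  nu_right : S.ν k w' ≤ 10 * scale k

variable (S) in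
/-- The distance of two points in the coordinates of generation `k`. -/
def split (k : ℕ) (w w' : V n) : ℝ :=
  ‖S.f k (S.U.starProjection w) - S.f k (S.U.starProjection w')‖ +
    ‖S.L k (S.U.starProjection w) (S.Uᗮ.starProjection (w - w'))‖

section Pair

variable {w w' : V n}

lemma split_nonneg : 0 ≤ S.split k w w' := add_nonneg (norm_nonneg _) (norm_nonneg _)

lemma Regular.norm_twist_le (h : S.Regular k w w') :
    ‖S.L k (S.U.starProjection w) (S.Uᗮ.starProjection w') -
      S.L k (S.U.starProjection w') (S.Uᗮ.starProjection w')‖ ≤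
      10 * S.β * ‖S.f k (S.U.starProjection w) - S.f k (S.U.starProjection w')‖ := by
  have hr := scale_pos k
  have hx : S.U.starProjection w ∈ S.U := Submodule.starProjection_apply_mem _ _
  have hx' : S.U.starProjection w' ∈ S.U := Submodule.starProjection_apply_mem _ _
  have h1 := norm_L_sub_L_le (k := k) hx' hx (Submodule.starProjection_apply_mem S.Uᗮ w')
    (by rw [norm_sub_rev]; exact h.chord)
  rw [norm_sub_rev, norm_sub_rev (S.f k (S.U.starProjection w'))] at h1
  have h2 := mul_le_mul_of_nonneg_left h.nu_right (mul_nonneg S.beta_nonneg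
    (norm_nonneg (S.f k (S.U.starProjection w) - S.f k (S.U.starProjection w'))))
  refine le_of_mul_le_mul_left (h1.trans (h2.trans_eq ?_)) hr
  ring

lemma Regular.norm_L_sub_le (h : S.Regular k w w') :
    ‖S.L k (S.U.starProjection w) (S.Uᗮ.starProjection w) -
      S.L k (S.U.starProjection w') (S.Uᗮ.starProjection w')‖ ≤ S.split k w w' := by
  have h1 := h.norm_twist_le
  have h2 := norm_add_le (S.L k (S.U.starProjection w) (S.Uᗮ.starProjection (w - w')))
    (S.L k (S.U.starProjection w) (S.Uᗮ.starProjection w') -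
      S.L k (S.U.starProjection w') (S.Uᗮ.starProjection w'))
  have e : S.L k (S.U.starProjection w) (S.Uᗮ.starProjection (w - w')) +
    (S.L k (S.U.starProjection w) (S.Uᗮ.starProjection w') -
      S.L k (S.U.starProjection w') (S.Uᗮ.starProjection w')) =
    S.L k (S.U.starProjection w) (S.Uᗮ.starProjection w) -
      S.L k (S.U.starProjection w') (S.Uᗮ.starProjection w') := by
    rw [map_sub, map_sub]; abel
  rw [e] at h2
  have h3 := mul_le_mul_of_nonneg_right S.beta_le
    (norm_nonneg (S.f k (S.U.starProjection w) - S.f k (S.U.starProjection w')))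
  unfold split
  linarith [norm_nonneg (S.f k (S.U.starProjection w) - S.f k (S.U.starProjection w'))]

lemma Regular.split_bounds (h : S.Regular k w w') :
    S.split k w w' ≤ 2 * ‖S.G k w - S.G k w'‖ ∧
      ‖S.G k w - S.G k w'‖ ≤ 2 * S.split k w w' := by
  have hx : S.U.starProjection w ∈ S.U := Submodule.starProjection_apply_mem _ _
  have hx' : S.U.starProjection w' ∈ S.U := Submodule.starProjection_apply_mem _ _
  have h1 := h.norm_twist_le
  have h2 := abs_inner_chord_L_le hx hx'
    (Submodule.starProjection_apply_mem S.Uᗮ (w - w')) h.chord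
  have e : S.G k w - S.G k w' = (S.f k (S.U.starProjection w) - S.f k (S.U.starProjection w') +
      S.L k (S.U.starProjection w) (S.Uᗮ.starProjection (w - w'))) +
      (S.L k (S.U.starProjection w) (S.Uᗮ.starProjection w') -
      S.L k (S.U.starProjection w') (S.Uᗮ.starProjection w')) := by
    rw [h.left, h.right, tube, tube, map_sub, map_sub]; abel
  rw [e]
  unfold split
  set δ := S.f k (S.U.starProjection w) - S.f k (S.U.starProjection w')
  set m := S.L k (S.U.starProjection w) (S.Uᗮ.starProjection (w - w'))
  set t := S.L k (S.U.starProjection w) (S.Uᗮ.starProjection w') -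
      S.L k (S.U.starProjection w') (S.Uᗮ.starProjection w')
  have hδ := norm_nonneg δ
  have hm := norm_nonneg m
  have h3 : ‖t‖ ≤ ‖δ‖ / 10 := by
    linarith [mul_le_mul_of_nonneg_right S.beta_le hδ]
  constructor
  · have h4 : 6 / 10 * (‖δ‖ + ‖m‖) ≤ ‖δ + m‖ := by
      refine le_of_sq_le_sq ?_ (norm_nonneg _)
      have h5 := mul_le_mul_of_nonneg_right S.beta_le (mul_nonneg hδ hm)
      rw [norm_add_sq_real]
      nlinarith [(abs_le.1 h2).1, sq_nonneg (‖δ‖ - ‖m‖)]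
    have h6 := norm_sub_le (δ + m + t) t
    rw [add_sub_cancel_right] at h6
    linarith
  · linarith [norm_add_le (δ + m) t, norm_add_le δ m]

/-- The displacements form a small Lipschitz perturbation of the map of generation `k`. -/
lemma Regular.norm_Delta_sub_le (h : S.Regular k w w') :
    ‖S.Δ k w - S.Δ k w'‖ ≤ ‖S.G k w - S.G k w'‖ / 5000 := by
  have hr := scale_pos k
  have hβ := S.beta_nonneg
  have hx : S.U.starProjection w ∈ S.U := Submodule.starProjection_apply_mem _ _
  have hx' : S.U.starProjection w' ∈ S.U := Submodule.starProjection_apply_mem _ _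
  have hy' : S.Uᗮ.starProjection w' ∈ S.Uᗮ := Submodule.starProjection_apply_mem _ _
  have hinc' : ‖S.tube (k + 1) w' - S.tube k w'‖ ≤ 11 * S.β * scale k :=
    (norm_tube_succ_sub_le k w').trans (by
      linarith [mul_le_mul_of_nonneg_left h.nu_right hβ])
  have hcut : scale k * |S.cut k w - S.cut k w'| ≤ 2 * S.split k w w' :=
    (abs_cut_sub_le k w w').trans (mul_le_mul_of_nonneg_left
      ((abs_norm_sub_norm_le _ _).trans h.norm_L_sub_le) zero_le_two)
  have c1 := norm_chord_sub_le hx hx' h.chord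
  have c2 := norm_tau_L_le (k := k) hx (Submodule.starProjection_apply_mem S.Uᗮ (w - w'))
  have c3 := h.norm_twist_le
  have c4 : ‖S.tau k (S.f k (S.U.starProjection w)) (S.L k (S.U.starProjection w')
      (S.Uᗮ.starProjection w')) - S.tau k (S.f k (S.U.starProjection w'))
        (S.L k (S.U.starProjection w') (S.Uᗮ.starProjection w'))‖ ≤
      10 * S.β * ‖S.f k (S.U.starProjection w) - S.f k (S.U.starProjection w')‖ := by
    have h1 := norm_tau_sub_tau_L_le (k := k) hx' hy'
      (x' := S.U.starProjection w) (by rw [norm_sub_rev]; exact h.chord)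
    rw [norm_sub_rev, norm_sub_rev (S.f k (S.U.starProjection w'))] at h1
    have h2 := mul_le_mul_of_nonneg_left h.nu_right (mul_nonneg hβ
      (norm_nonneg (S.f k (S.U.starProjection w) - S.f k (S.U.starProjection w'))))
    refine le_of_mul_le_mul_left (h1.trans (h2.trans_eq ?_)) hr
    ring
  have hinc : ‖(S.tube (k + 1) w - S.tube k w) - (S.tube (k + 1) w' - S.tube k w')‖ ≤
      21 * S.β * S.split k w w' := by
    rw [tube_succ_sub, tube_succ_sub]
    unfold split
    set X := S.U.starProjection w
    set X' := S.U.starProjection w'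
    set Y' := S.Uᗮ.starProjection w'
    have e : S.f (k + 1) X - S.f k X - S.tau k (S.f k X) (S.L k X (S.Uᗮ.starProjection w)) -
        (S.f (k + 1) X' - S.f k X' - S.tau k (S.f k X') (S.L k X' Y')) =
        -((S.f k X - S.f k X') - (S.f (k + 1) X - S.f (k + 1) X')) -
        S.tau k (S.f k X) (S.L k X (S.Uᗮ.starProjection (w - w'))) -
        S.tau k (S.f k X) (S.L k X Y' - S.L k X' Y') -
        (S.tau k (S.f k X) (S.L k X' Y') - S.tau k (S.f k X') (S.L k X' Y')) := by
      simp only [map_sub, Y']; abel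
    rw [e]
    refine (norm_sub_le _ _).trans ?_
    have n1 := norm_sub_le (-((S.f k X - S.f k X') - (S.f (k + 1) X - S.f (k + 1) X')) -
        S.tau k (S.f k X) (S.L k X (S.Uᗮ.starProjection (w - w'))))
        (S.tau k (S.f k X) (S.L k X Y' - S.L k X' Y'))
    have n2 := norm_sub_le (-((S.f k X - S.f k X') - (S.f (k + 1) X - S.f (k + 1) X')))
        (S.tau k (S.f k X) (S.L k X (S.Uᗮ.starProjection (w - w'))))
    rw [norm_neg] at n2
    have n3 := norm_tau_le_self (S := S) (k := k) (S.f k X) (S.L k X Y' - S.L k X' Y')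
    have n4 := mul_nonneg hβ (norm_nonneg (S.L k X (S.Uᗮ.starProjection (w - w'))))
    linarith
  have e : S.Δ k w - S.Δ k w' =
      S.cut k w • ((S.tube (k + 1) w - S.tube k w) - (S.tube (k + 1) w' - S.tube k w')) +
      (S.cut k w - S.cut k w') • (S.tube (k + 1) w' - S.tube k w') := by
    rw [Δ, Δ]; module
  have n1 : ‖S.cut k w • ((S.tube (k + 1) w - S.tube k w) -
      (S.tube (k + 1) w' - S.tube k w'))‖ ≤ 21 * S.β * S.split k w w' := by
    rw [norm_smul, Real.norm_of_nonneg (cut_nonneg k w)]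
    exact (mul_le_of_le_one_left (norm_nonneg _) (cut_le_one k w)).trans hinc
  have n2 : ‖(S.cut k w - S.cut k w') • (S.tube (k + 1) w' - S.tube k w')‖ ≤
      22 * S.β * S.split k w w' := by
    rw [norm_smul, Real.norm_eq_abs]
    refine (mul_le_mul_of_nonneg_left hinc' (abs_nonneg _)).trans ?_
    linarith [mul_le_mul_of_nonneg_left hcut (mul_nonneg (by norm_num : (0 : ℝ) ≤ 11) hβ)]
  have n3 := mul_le_mul_of_nonneg_right S.beta_le (split_nonneg (S := S) (k := k)
    (w := w) (w' := w'))
  have n4 := h.split_bounds.1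
  rw [e]
  linarith [norm_add_le (S.cut k w • ((S.tube (k + 1) w - S.tube k w) -
      (S.tube (k + 1) w' - S.tube k w')))
      ((S.cut k w - S.cut k w') • (S.tube (k + 1) w' - S.tube k w')),
      split_nonneg (S := S) (k := k) (w := w) (w' := w')]

end Pair

section Pair

variable {w w' : V n}

variable (S) in
/-- The distance of two points in the splitting given by `U`. -/
def q (w w' : V n) : ℝ :=
  ‖S.U.starProjection w - S.U.starProjection w'‖ +
    ‖S.Uᗮ.starProjection (w - w')‖

lemma q_nonneg : 0 ≤ S.q w w' := add_nonneg (norm_nonneg _) (norm_nonneg _)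

lemma norm_sub_le_q : ‖w - w'‖ ≤ S.q w w' := by
  conv_lhs => rw [← S.U.starProjection_add_starProjection_orthogonal (w - w')]
  rw [q, ← map_sub]
  exact norm_add_le _ _

lemma q_le : S.q w w' ≤ 2 * ‖w - w'‖ := by
  rw [q, ← map_sub]
  linarith [Submodule.norm_starProjection_apply_le S.U (w - w'),
    Submodule.norm_starProjection_apply_le S.Uᗮ (w - w')]

lemma Regular.q_bounds (h : S.Regular k w w') :
    S.q w w' ≤ 2 * S.κ * ‖S.G k w - S.G k w'‖ ∧ ‖S.G k w - S.G k w'‖ ≤ 2 * S.κ * S.q w w' := by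
  have hx : S.U.starProjection w ∈ S.U := Submodule.starProjection_apply_mem _ _
  have hx' : S.U.starProjection w' ∈ S.U := Submodule.starProjection_apply_mem _ _
  have hy : S.Uᗮ.starProjection (w - w') ∈ S.Uᗮ := Submodule.starProjection_apply_mem _ _
  obtain ⟨h1, h2⟩ := chord_bounds hx hx' h.chord
  obtain ⟨h3, h4⟩ := h.split_bounds
  have h5 := norm_le_norm_L (k := k) hx hy
  have h6 := norm_L_le (S := S) (k := k) (S.U.starProjection w) (S.Uᗮ.starProjection (w - w'))
  have h7 := one_le_kappa (S := S)
  have h8 : ‖S.Uᗮ.starProjection (w - w')‖ ≤ S.κ * ‖S.Uᗮ.starProjection (w - w')‖ :=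
    le_mul_of_one_le_left (norm_nonneg _) h7
  have h9 := mul_le_mul_of_nonneg_left h3 (by linarith : 0 ≤ S.κ)
  unfold q split at *
  constructor <;> linarith

lemma norm_G_sub_sub_le {m : ℕ} (hmk : m ≤ k) :
    |‖S.G k w - S.G k w'‖ - ‖S.G m w - S.G m w'‖| ≤ 8 * S.β * scale m := by
  refine (abs_norm_sub_norm_le _ _).trans ?_
  have h1 := norm_G_sub_le (S := S) w hmk
  have h2 := norm_G_sub_le (S := S) w' hmk
  have e : S.G k w - S.G k w' - (S.G m w - S.G m w') =
      (S.G k w - S.G m w) - (S.G k w' - S.G m w') := by abel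
  rw [e]
  have h3 := mul_nonneg S.beta_nonneg (scale_pos k).le
  linarith [norm_sub_le (S.G k w - S.G m w) (S.G k w' - S.G m w')]

variable (S) in
/-- From generation `k` on, the distance of the images of the two points is essentially
constant. -/
def Settled (k : ℕ) (w w' : V n) : Prop :=
  scale k / 100 ≤ ‖S.G k w - S.G k w'‖ ∨ (scale k ≤ S.ν k w ∧ scale k ≤ S.ν k w')

lemma regular_or_settled_zero (w w' : V n) : S.Regular 0 w w' ∨ S.Settled 0 w w' := by
  have hr := scale_pos 0
  by_cases hD : ‖S.U.starProjection w - S.U.starProjection w'‖ ≤ scale 0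
  · by_cases ha : scale 0 ≤ S.ν 0 w ∧ scale 0 ≤ S.ν 0 w'
    · exact Or.inr (Or.inr ha)
    by_cases hc : S.ν 0 w ≤ 10 * scale 0 ∧ S.ν 0 w' ≤ 10 * scale 0
    · exact Or.inl ⟨G_zero_eq_tube w, G_zero_eq_tube w', hD, hc.1, hc.2⟩
    · refine Or.inr (Or.inl ?_)
      have h1 : |S.ν 0 w - S.ν 0 w'| ≤ ‖w - w'‖ := by
        refine (abs_norm_sub_norm_le _ _).trans ?_
        rw [L_zero, L_zero, ← map_sub]
        exact Submodule.norm_starProjection_apply_le _ _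
      change scale 0 / 100 ≤ ‖w - w'‖
      rw [abs_le] at h1
      rw [not_and_or, not_le, not_le] at ha hc
      rcases ha with ha | ha <;> rcases hc with hc | hc <;> linarith
  · refine Or.inr (Or.inl ?_)
    rw [← map_sub] at hD
    have := Submodule.norm_starProjection_apply_le S.U (w - w')
    change scale 0 / 100 ≤ ‖w - w'‖
    linarith

lemma Regular.succ (h : S.Regular k w w') :
    S.Regular (k + 1) w w' ∨ S.Settled k w w' ∨ S.Settled (k + 1) w w' := by
  have hr := scale_pos k
  have hx : S.U.starProjection w ∈ S.U := Submodule.starProjection_apply_mem _ _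
  have hx' : S.U.starProjection w' ∈ S.U := Submodule.starProjection_apply_mem _ _
  have hs := h.split_bounds.1
  by_cases hD : ‖S.f (k + 1) (S.U.starProjection w) - S.f (k + 1) (S.U.starProjection w')‖ ≤
      scale (k + 1)
  · by_cases ha : scale k / 4 ≤ S.ν k w ∧ scale k / 4 ≤ S.ν k w'
    · refine Or.inr (Or.inr (Or.inr ?_))
      rw [scale_succ]
      constructor
      · linarith [nu_le_succ (S := S) k w, ha.1]
      · linarith [nu_le_succ (S := S) k w', ha.2]
    by_cases hc : S.ν k w ≤ scale k / 2 ∧ S.ν k w' ≤ scale k / 2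
    · refine Or.inl ⟨G_succ_eq_tube h.left hc.1, G_succ_eq_tube h.right hc.2, hD, ?_, ?_⟩
      · rw [scale_succ]; linarith [nu_succ_le (S := S) k w, hc.1]
      · rw [scale_succ]; linarith [nu_succ_le (S := S) k w', hc.2]
    · refine Or.inr (Or.inl (Or.inl ?_))
      have h1 : |S.ν k w - S.ν k w'| ≤ S.split k w w' :=
        (abs_norm_sub_norm_le _ _).trans h.norm_L_sub_le
      rw [abs_le] at h1
      rw [not_and_or, not_le, not_le] at ha hc
      rcases ha with ha | ha <;> rcases hc with hc | hc <;> linarith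
  · refine Or.inr (Or.inl (Or.inl ?_))
    have h1 := norm_chord_sub_le hx hx' h.chord
    unfold split at hs
    set δ := S.f k (S.U.starProjection w) - S.f k (S.U.starProjection w')
    set δ' := S.f (k + 1) (S.U.starProjection w) - S.f (k + 1) (S.U.starProjection w')
    have h2 := norm_sub_norm_le δ' δ
    rw [norm_sub_rev δ' δ] at h2
    have h3 := mul_le_mul_of_nonneg_right S.beta_le (norm_nonneg δ)
    rw [scale_succ] at hD
    linarith [norm_nonneg (S.L k (S.U.starProjection w) (S.Uᗮ.starProjection (w - w'))),
      norm_nonneg δ]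

lemma regular_or_settled (k : ℕ) (w w' : V n) : S.Regular k w w' ∨ ∃ m ≤ k,
    S.Settled m w w' ∧ S.q w w' ≤ 4 * S.κ * ‖S.G m w - S.G m w'‖ ∧
      ‖S.G m w - S.G m w'‖ ≤ 4 * S.κ * S.q w w' := by
  have hκ := one_le_kappa (S := S)
  have hq : 0 ≤ S.q w w' := q_nonneg
  have hκq := mul_nonneg (by linarith : 0 ≤ S.κ) hq
  induction k with
  | zero =>
    rcases regular_or_settled_zero (S := S) w w' with h | h
    · exact Or.inl h
    refine Or.inr ⟨0, le_rfl, h, ?_, ?_⟩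
    · change S.q w w' ≤ 4 * S.κ * ‖w - w'‖
      have := mul_le_mul_of_nonneg_right hκ (norm_nonneg (w - w'))
      linarith [q_le (S := S) (w := w) (w' := w'), norm_nonneg (w - w')]
    · change ‖w - w'‖ ≤ 4 * S.κ * S.q w w'
      have := mul_le_mul_of_nonneg_right hκ hq
      linarith [norm_sub_le_q (S := S) (w := w) (w' := w')]
  | succ k ih =>
    rcases ih with h | ⟨m, hm, h⟩
    · have hb := h.q_bounds
      have hκG := mul_nonneg (by linarith : 0 ≤ S.κ) (norm_nonneg (S.G k w - S.G k w'))
      rcases h.succ with h1 | h1 | h1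
      · exact Or.inl h1
      · exact Or.inr ⟨k, k.le_succ, h1, by linarith [hb.1], by linarith [hb.2]⟩
      · refine Or.inr ⟨k + 1, le_rfl, h1, ?_⟩
        have h2 := h.norm_Delta_sub_le
        have e : S.G (k + 1) w - S.G (k + 1) w' =
            (S.G k w - S.G k w') + (S.Δ k w - S.Δ k w') := by
          rw [G_succ, G_succ]; abel
        have h3 := norm_add_le (S.G k w - S.G k w') (S.Δ k w - S.Δ k w')
        have h4 := norm_sub_le (S.G (k + 1) w - S.G (k + 1) w') (S.Δ k w - S.Δ k w')
        rw [e, add_sub_cancel_right, ← e] at h4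
        rw [← e] at h3
        have h5 : ‖S.G k w - S.G k w'‖ ≤ 2 * ‖S.G (k + 1) w - S.G (k + 1) w'‖ := by
          linarith [norm_nonneg (S.G k w - S.G k w')]
        have h6 := mul_le_mul_of_nonneg_left h5 (by linarith : 0 ≤ S.κ)
        exact ⟨by linarith [hb.1], by linarith [hb.2]⟩
    · exact Or.inr ⟨m, hm.trans k.le_succ, h⟩

lemma Settled.norm_G_sub_bounds {m : ℕ} (h : S.Settled m w w') (hmk : m ≤ k) :
    ‖S.G k w - S.G k w'‖ ≤ 2 * ‖S.G m w - S.G m w'‖ ∧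
      ‖S.G m w - S.G m w'‖ ≤ 2 * ‖S.G k w - S.G k w'‖ := by
  rcases h with h | ⟨h, h'⟩
  · have h1 := abs_le.1 (norm_G_sub_sub_le (S := S) (w := w) (w' := w') hmk)
    have h2 := mul_le_mul_of_nonneg_right S.beta_le (scale_pos m).le
    constructor <;> linarith [h1.1, h1.2]
  · rw [G_eq_of_le hmk h, G_eq_of_le hmk h']
    constructor <;> linarith [norm_nonneg (S.G m w - S.G m w')]

/-- The maps `G k` are uniformly bi-Lipschitz. -/
lemma norm_G_sub_bounds (k : ℕ) (w w' : V n) :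
    S.q w w' ≤ 8 * S.κ * ‖S.G k w - S.G k w'‖ ∧ ‖S.G k w - S.G k w'‖ ≤ 8 * S.κ * S.q w w' := by
  have hκ : 0 ≤ S.κ := by linarith [one_le_kappa (S := S)]
  rcases regular_or_settled (S := S) k w w' with h | ⟨m, hm, h, h1, h2⟩
  · have h3 := mul_nonneg hκ (q_nonneg (S := S) (w := w) (w' := w'))
    have h4 := mul_nonneg hκ (norm_nonneg (S.G k w - S.G k w'))
    exact ⟨by linarith [h.q_bounds.1], by linarith [h.q_bounds.2]⟩
  · obtain ⟨h3, h4⟩ := h.norm_G_sub_bounds hm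
    have h5 := mul_le_mul_of_nonneg_left h4 hκ
    exact ⟨by linarith, by linarith⟩

lemma norm_Delta_sub_le (k : ℕ) (w w' : V n) :
    ‖S.Δ k w - S.Δ k w'‖ ≤ 1 / 2 * ‖S.G k w - S.G k w'‖ := by
  rcases regular_or_settled (S := S) k w w' with h | ⟨m, hm, h, -⟩
  · linarith [h.norm_Delta_sub_le, norm_nonneg (S.G k w - S.G k w')]
  · obtain ⟨-, h4⟩ := h.norm_G_sub_bounds hm
    rcases h with h | ⟨h, h'⟩
    · have h5 : scale k ≤ scale m :=
        pow_le_pow_of_le_one (by norm_num) (by norm_num) (by omega)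
      have h6 := mul_le_mul_of_nonneg_right S.beta_le (scale_pos k).le
      linarith [norm_sub_le (S.Δ k w) (S.Δ k w'), norm_Delta_le (S := S) k w,
        norm_Delta_le (S := S) k w', scale_pos k]
    · rw [Δ, Δ, cut_eq_zero (scale_le_nu_of_le hm h), cut_eq_zero (scale_le_nu_of_le hm h'),
        zero_smul, zero_smul, sub_self, norm_zero]
      positivity

end Pair

/-- A small Lipschitz perturbation of a bijection of a complete space is surjective. -/
lemma surjective_add_of_norm_sub_le {F : Type*} [NormedAddCommGroup F] [CompleteSpace F]
    {G Δ : F → F} (hG : Function.Surjective G)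
    (h : ∀ w w', ‖Δ w - Δ w'‖ ≤ 1 / 2 * ‖G w - G w'‖) :
    Function.Surjective fun w => G w + Δ w := by
  intro z
  obtain ⟨I, hI⟩ := hG.hasRightInverse
  have hc : ContractingWith (1 / 2) fun v => z - Δ (I v) := by
    refine ⟨by rw [← NNReal.coe_lt_coe]; norm_num, LipschitzWith.of_dist_le_mul fun v v' => ?_⟩
    rw [dist_eq_norm, sub_sub_sub_cancel_left, norm_sub_rev, dist_eq_norm]
    have := h (I v) (I v')
    rw [hI v, hI v'] at this
    simpa using this
  refine ⟨I (hc.fixedPoint _), ?_⟩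
  have h1 : z - Δ (I (hc.fixedPoint _)) = hc.fixedPoint _ := hc.fixedPoint_isFixedPt
  change G (I _) + Δ (I _) = z
  rw [hI]
  nth_rewrite 1 [← h1]
  exact sub_add_cancel _ _

lemma surjective_G (k : ℕ) : Function.Surjective (S.G k) := by
  induction k with
  | zero => exact fun w => ⟨w, rfl⟩
  | succ k ih => exact surjective_add_of_norm_sub_le ih (norm_Delta_sub_le k)

lemma tendsto_scale : Filter.Tendsto scale Filter.atTop (nhds 0) :=
  (tendsto_pow_atTop_nhds_zero_of_lt_one (by norm_num) (by norm_num)).comp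
    (Filter.tendsto_add_atTop_nat 4)

variable (S) in
lemma exists_limit : ∃ g : V n → V n, ∀ k w, ‖g w - S.G k w‖ ≤ 4 * S.β * scale k := by
  have hβ := S.beta_nonneg
  have hlim : ∀ w, ∃ l, Filter.Tendsto (fun k => S.G k w) Filter.atTop (nhds l) := by
    intro w
    refine cauchySeq_tendsto_of_complete
      (cauchySeq_of_le_tendsto_0 (fun m => 2 * (4 * S.β * scale m)) ?_ ?_)
    · have key : ∀ i m, m ≤ i → ‖S.G i w - S.G m w‖ ≤ 4 * S.β * scale m := fun i m him => by
        linarith [norm_G_sub_le (S := S) w him, mul_nonneg hβ (scale_pos i).le]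
      intro i j m hi hj
      have h1 := norm_sub_le (S.G i w - S.G m w) (S.G j w - S.G m w)
      rw [sub_sub_sub_cancel_right] at h1
      rw [dist_eq_norm]
      linarith [key i m hi, key j m hj]
    · simpa using (tendsto_scale.const_mul (4 * S.β)).const_mul 2
  choose g hg using hlim
  refine ⟨g, fun k w => ?_⟩
  refine le_of_tendsto ((hg w).sub_const (S.G k w)).norm ?_
  filter_upwards [Filter.eventually_ge_atTop k] with i hi
  linarith [norm_G_sub_le (S := S) w hi, mul_nonneg hβ (scale_pos i).le]

/-- A point whose image lies in `E` has no normal component. -/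
lemma starProjection_orthogonal_eq_zero {w : V n} (hp : p ∈ S.E)
    (h : ∀ k, ‖p - S.G k w‖ ≤ 4 * S.β * scale k) : S.Uᗮ.starProjection w = 0 := by
  have hx : S.U.starProjection w ∈ S.U := Submodule.starProjection_apply_mem _ _
  have hy : S.Uᗮ.starProjection w ∈ S.Uᗮ := Submodule.starProjection_apply_mem _ _
  have hβ := S.beta_nonneg
  have hβ' := S.beta_le
  by_contra hne
  have hex : ∃ m, scale m / 2 < S.ν m w := by
    have hpos : 0 < ‖S.Uᗮ.starProjection w‖ / S.κ :=
      div_pos (norm_pos_iff.2 hne) (by linarith [one_le_kappa (S := S)])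
    obtain ⟨m, hm⟩ := (tendsto_scale.eventually (gt_mem_nhds hpos)).exists
    refine ⟨m, ?_⟩
    have h1 := norm_le_norm_L (k := m) hx hy
    rw [← div_le_iff₀' (by linarith [one_le_kappa (S := S)])] at h1
    have h2 : scale m < S.ν m w := hm.trans_le h1
    linarith [scale_pos m]
  classical
  have hm := Nat.find_spec hex
  have hmin : ∀ j < Nat.find hex, S.ν j w ≤ scale j / 2 := fun j hj =>
    not_lt.1 (Nat.find_min hex hj)
  generalize Nat.find hex = m at hm hmin
  have htube : ∀ j ≤ m, S.G j w = S.tube j w := by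
    intro j hj
    induction j with
    | zero => exact G_zero_eq_tube w
    | succ j ih => exact G_succ_eq_tube (ih (by omega)) (hmin j hj)
  have hr := scale_pos m
  have hG := h m
  have hA := S.A_le_b m p
  have hb := S.b_le m hp
  have hA0 := S.A_nonneg m p
  have hβr := mul_le_mul_of_nonneg_right hβ' hr.le
  have hAr := mul_le_mul_of_nonneg_right (hA.trans hb) hr.le
  cases m with
  | zero =>
    have h1 := S.init_dist p hp
    have h2 : ‖S.Uᗮ.starProjection (p - w)‖ ≤ ‖p - w‖ :=
      Submodule.norm_starProjection_apply_le _ _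
    have h3 : ‖S.Uᗮ.starProjection w‖ ≤ ‖S.Uᗮ.starProjection p‖ +
        ‖S.Uᗮ.starProjection (p - w)‖ := by
      have := norm_sub_le (S.Uᗮ.starProjection p) (S.Uᗮ.starProjection (p - w))
      rwa [← map_sub, sub_sub_cancel] at this
    have h4 : ‖p - w‖ ≤ 4 * S.β * scale 0 := hG
    have h5 : scale 0 / 2 < ‖S.Uᗮ.starProjection w‖ := hm
    have h6 := mul_le_mul_of_nonneg_right (S.a_le_A' 0 p) hr.le
    linarith [mul_nonneg (S.a_nonneg 0 p) hr.le]
  | succ m =>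
    have h0 := hmin m m.lt_succ_self
    have h1 := nu_succ_le (S := S) m w
    have h2 : S.ν (m + 1) w ≤ 5 * scale (m + 1) := by rw [scale_succ]; linarith
    have e := htube (m + 1) le_rfl
    rw [e, tube] at hG
    unfold ν at h2 hm
    set X := S.U.starProjection w
    set l := S.L (m + 1) X (S.Uᗮ.starProjection w)
    have e1 : S.f (m + 1) X - p = -(p - (S.f (m + 1) X + l)) - l := by abel
    have h3 := norm_sub_le (-(p - (S.f (m + 1) X + l))) l
    rw [← e1, norm_neg] at h3
    have h40 : ‖S.f (m + 1) X - p‖ ≤ 40 * scale (m + 1) := by linarith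
    have h4 := norm_N_f_le hx hp h40
    have h5 : ‖S.T p (m + 1) l‖ ≤ S.A (m + 1) p * ‖l‖ := norm_T_L_le hx hy hp h40
    have h6 := mul_le_mul_of_nonneg_left h2 hA0
    have h7 := S.norm_N_le p (m + 1) (p - (S.f (m + 1) X + l))
    have e2 : l = -S.N p (m + 1) (p - (S.f (m + 1) X + l)) -
        S.N p (m + 1) (S.f (m + 1) X - p) + S.T p (m + 1) l := by
      have : l = S.N p (m + 1) l + S.T p (m + 1) l := (S.N_add_T _ _ _).symm
      conv_lhs => rw [this]
      simp only [map_sub, map_add]; abel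
    have h8 := norm_add_le (-S.N p (m + 1) (p - (S.f (m + 1) X + l)) -
        S.N p (m + 1) (S.f (m + 1) X - p)) (S.T p (m + 1) l)
    have h9 := norm_sub_le (-S.N p (m + 1) (p - (S.f (m + 1) X + l)))
        (S.N p (m + 1) (S.f (m + 1) X - p))
    rw [← e2] at h8
    rw [norm_neg] at h9
    linarith

variable (S) in
theorem exists_biLipschitz : ∃ g : V n → V n, Function.Bijective g ∧ S.E ⊆ g '' S.U ∧
    ∀ w w', ‖w - w'‖ ≤ 16 * S.κ * ‖g w - g w'‖ ∧ ‖g w - g w'‖ ≤ 16 * S.κ * ‖w - w'‖ := by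
  obtain ⟨g, hg⟩ := S.exists_limit
  have hκ := one_le_kappa (S := S)
  have hlim : ∀ w, Filter.Tendsto (fun k => S.G k w) Filter.atTop (nhds (g w)) := fun w => by
    rw [tendsto_iff_norm_sub_tendsto_zero]
    refine squeeze_zero (fun _ => norm_nonneg _)
      (fun k => (norm_sub_rev _ _).trans_le (hg k w)) ?_
    simpa using tendsto_scale.const_mul (4 * S.β)
  have hnorm : ∀ w w', Filter.Tendsto (fun k => ‖S.G k w - S.G k w'‖) Filter.atTop
      (nhds ‖g w - g w'‖) := fun w w' => ((hlim w).sub (hlim w')).norm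
  have hbd : ∀ w w', ‖w - w'‖ ≤ 16 * S.κ * ‖g w - g w'‖ ∧
      ‖g w - g w'‖ ≤ 16 * S.κ * ‖w - w'‖ := by
    intro w w'
    have h1 : S.q w w' ≤ 8 * S.κ * ‖g w - g w'‖ := ge_of_tendsto' ((hnorm w w').const_mul _)
      fun k => (norm_G_sub_bounds k w w').1
    have h2 : ‖g w - g w'‖ ≤ 8 * S.κ * S.q w w' := le_of_tendsto' (hnorm w w')
      fun k => (norm_G_sub_bounds k w w').2
    have h3 := mul_nonneg (by linarith : 0 ≤ S.κ) (norm_nonneg (g w - g w'))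
    have h4 := mul_le_mul_of_nonneg_left (q_le (S := S) (w := w) (w' := w'))
      (by linarith : 0 ≤ S.κ)
    exact ⟨by linarith [norm_sub_le_q (S := S) (w := w) (w' := w')], by linarith⟩
  have hlip : LipschitzWith (16 * S.κ).toNNReal g := LipschitzWith.of_dist_le_mul fun w w' => by
    rw [dist_eq_norm, dist_eq_norm, Real.coe_toNNReal _ (by linarith)]
    exact (hbd w w').2
  have hanti : AntilipschitzWith (16 * S.κ).toNNReal g :=
    AntilipschitzWith.of_le_mul_dist fun w w' => by
      rw [dist_eq_norm, dist_eq_norm, Real.coe_toNNReal _ (by linarith)]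
      exact (hbd w w').1
  have hsurj : Function.Surjective g := by
    intro z
    have hcl : IsClosed (range g) := hanti.isClosed_range hlip.uniformContinuous
    choose I hI using fun k => surjective_G (S := S) k z
    change z ∈ range g
    refine hcl.mem_of_tendsto (b := Filter.atTop) (f := fun k => g (I k)) ?_
      (Filter.Eventually.of_forall fun k => mem_range_self _)
    rw [tendsto_iff_norm_sub_tendsto_zero]
    refine squeeze_zero (fun _ => norm_nonneg _) (fun k => ?_)
      (by simpa using tendsto_scale.const_mul (4 * S.β))
    have := hg k (I k)
    rwa [hI k] at this
  refine ⟨g, ⟨hanti.injective, hsurj⟩, fun p hp => ?_, hbd⟩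
  obtain ⟨w, rfl⟩ := hsurj p
  refine ⟨w, ?_, rfl⟩
  have h0 := starProjection_orthogonal_eq_zero hp fun k => hg k w
  have h1 := S.U.starProjection_add_starProjection_orthogonal w
  rw [h0, add_zero] at h1
  exact Submodule.starProjection_eq_self_iff.1 h1

end Surface

end FlatData

lemma le_biSup_of_le {ι : Type*} {s : Set ι} {F : ι → ℝ} {C : ℝ} (hF : ∀ i ∈ s, F i ≤ C)
    {i : ι} (hi : i ∈ s) : F i ≤ ⨆ j ∈ s, F j := by
  have hb : BddAbove (range fun j => ⨆ _ : j ∈ s, F j) := by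
    refine ⟨max C 0, ?_⟩
    rintro _ ⟨j, rfl⟩
    exact Real.iSup_le (fun hj => (hF j hj).trans (le_max_left _ _)) (le_max_right _ _)
  refine le_trans ?_ (le_ciSup hb i)
  have : Nonempty (i ∈ s) := ⟨hi⟩
  exact (ciSup_const (a := F i)).ge

lemma biSup_le_of_le {ι : Type*} {s : Set ι} {F : ι → ℝ} {C : ℝ} (hC : 0 ≤ C)
    (hF : ∀ i ∈ s, F i ≤ C) : ⨆ i ∈ s, F i ≤ C :=
  Real.iSup_le (fun i => Real.iSup_le (fun hi => hF i hi) hC) hC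

section LocalDistance

variable {n : ℕ} {x y : V n} {r R t : ℝ} {A B : Set (V n)}

lemma nhd_comm : nhd x r A B = nhd x r B A := by
  unfold nhd
  rw [max_comm]

lemma nhd_nonneg (hr : 0 ≤ r) : 0 ≤ nhd x r A B :=
  mul_nonneg (inv_nonneg.2 hr) (le_max_of_le_left
    (Real.iSup_nonneg fun _ => Real.iSup_nonneg fun _ => infDist_nonneg))

lemma infDist_le_of_nhd_le (hr : 0 < r) (hB : B.Nonempty) (h : nhd x r A B ≤ t)
    (hy : y ∈ A) (hyx : ‖y - x‖ < r) : infDist y B ≤ t * r := by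
  obtain ⟨b, hb⟩ := hB
  have h1 : infDist y B ≤ ⨆ z ∈ A ∩ ball x r, infDist z B := by
    have hmem : y ∈ A ∩ ball x r := ⟨hy, mem_ball_iff_norm.2 hyx⟩
    refine le_biSup_of_le (F := fun z => infDist z B) (C := r + dist x b) (fun z hz => ?_) hmem
    have h1 := mem_ball.1 hz.2
    linarith [infDist_le_dist_of_mem (x := z) hb, dist_triangle z x b]
  unfold nhd at h
  rw [inv_mul_le_iff₀ hr, mul_comm] at h
  exact h1.trans ((le_max_left _ _).trans h)

lemma nhd_le_of_infDist_le (hr : 0 < r) (ht : 0 ≤ t)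
    (hA : ∀ y ∈ A, ‖y - x‖ < r → infDist y B ≤ t * r)
    (hB : ∀ y ∈ B, ‖y - x‖ < r → infDist y A ≤ t * r) : nhd x r A B ≤ t := by
  unfold nhd
  rw [inv_mul_le_iff₀ hr, mul_comm]
  exact max_le
    (biSup_le_of_le (by positivity) fun y hy => hA y hy.1 (mem_ball_iff_norm.1 hy.2))
    (biSup_le_of_le (by positivity) fun y hy => hB y hy.1 (mem_ball_iff_norm.1 hy.2))

lemma nhd_le_of_le (hr : 0 < r) (hrR : r ≤ R) (hA : A.Nonempty) (hB : B.Nonempty) :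
    nhd x r A B ≤ R / r * nhd x R A B := by
  have hR : 0 < R := hr.trans_le hrR
  have h0 := nhd_nonneg (x := x) (A := A) (B := B) hR.le
  have e : R / r * nhd x R A B * r = nhd x R A B * R := by field_simp
  refine nhd_le_of_infDist_le hr (by positivity) (fun y hy h => ?_) (fun y hy h => ?_)
  · rw [e]
    exact infDist_le_of_nhd_le hR hB le_rfl hy (h.trans_le hrR)
  · rw [e, nhd_comm]
    exact infDist_le_of_nhd_le hR hA le_rfl hy (h.trans_le hrR)

end LocalDistance

section Planes

variable {n : ℕ} {P Q : Set (V n)} {D F : Submodule ℝ (V n)} {x p q : V n} {r t : ℝ}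

lemma IsAffinePlane.exists_direction {d : ℕ} (hP : IsAffinePlane n d P) (hp : p ∈ P) :
    ∃ D : Submodule ℝ (V n), ∀ z, z ∈ P ↔ z - p ∈ D := by
  obtain ⟨Q, rfl, -, -⟩ := hP
  exact ⟨Q.direction, fun z => (AffineSubspace.vsub_right_mem_direction_iff_mem hp z).symm⟩

lemma norm_orthogonal_le_infDist (hP : ∀ z, z ∈ P ↔ z - p ∈ D) (z : V n) :
    ‖Dᗮ.starProjection (z - p)‖ ≤ infDist z P := by
  have hp : p ∈ P := by rw [hP, sub_self]; exact D.zero_mem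
  rw [le_infDist ⟨p, hp⟩]
  intro y hy
  have h1 : Dᗮ.starProjection (y - p) = 0 := by
    rw [Submodule.starProjection_orthogonal_val, sub_eq_zero]
    exact (Submodule.starProjection_eq_self_iff.2 ((hP y).1 hy)).symm
  have e : z - p = (z - y) + (y - p) := by abel
  rw [e, map_add, h1, add_zero, dist_eq_norm]
  exact Submodule.norm_starProjection_apply_le _ _

lemma norm_orthogonal_le_of_nhd_le (hr : 0 < r) (hP : ∀ z, z ∈ P ↔ z - p ∈ D)
    (hQ : ∀ z, z ∈ Q ↔ z - q ∈ F) (hp : ‖p - x‖ < r / 2) (h : nhd x r P Q ≤ t)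
    {v : V n} (hv : v ∈ D) : ‖Fᗮ.starProjection v‖ ≤ 6 * t * ‖v‖ := by
  have hpP : p ∈ P := by rw [hP, sub_self]; exact D.zero_mem
  have hqQ : q ∈ Q := by rw [hQ, sub_self]; exact F.zero_mem
  by_cases hv0 : v = 0
  · simp [hv0]
  have hpos := norm_pos_iff.2 hv0
  set s := r / 3 / ‖v‖ with hs
  have hs0 : 0 < s := by positivity
  have hsv : s * ‖v‖ = r / 3 := by rw [hs]; field_simp
  have hy : p + s • v ∈ P := by
    rw [hP, add_sub_cancel_left]; exact D.smul_mem _ hv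
  have hyx : ‖p + s • v - x‖ < r := by
    have e : p + s • v - x = (p - x) + s • v := by abel
    have h1 := norm_add_le (p - x) (s • v)
    rw [norm_smul, Real.norm_of_nonneg hs0.le, hsv] at h1
    rw [e]
    linarith
  have h1 := (norm_orthogonal_le_infDist hQ _).trans
    (infDist_le_of_nhd_le hr ⟨q, hqQ⟩ h hy hyx)
  have h2 := (norm_orthogonal_le_infDist hQ _).trans
    (infDist_le_of_nhd_le hr ⟨q, hqQ⟩ h hpP (by linarith))
  have e : s • Fᗮ.starProjection v =
      Fᗮ.starProjection (p + s • v - q) - Fᗮ.starProjection (p - q) := by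
    rw [← map_sub, ← map_smul]
    congr 1
    abel
  have h3 := norm_sub_le (Fᗮ.starProjection (p + s • v - q)) (Fᗮ.starProjection (p - q))
  rw [← e, norm_smul, Real.norm_of_nonneg hs0.le] at h3
  refine le_of_mul_le_mul_left (h3.trans ?_) hs0
  have e2 : s * (6 * t * ‖v‖) = 6 * t * (s * ‖v‖) := by ring
  rw [e2, hsv]
  linarith

/-- Planes which are close in the local Hausdorff distance have close orthogonal projections. -/
lemma norm_starProjection_sub_le (hr : 0 < r) (hP : ∀ z, z ∈ P ↔ z - p ∈ D)
    (hQ : ∀ z, z ∈ Q ↔ z - q ∈ F) (hp : ‖p - x‖ < r / 2) (hq : ‖q - x‖ < r / 2)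
    (h : nhd x r P Q ≤ t) : ‖D.starProjection - F.starProjection‖ ≤ 12 * t := by
  have ht : 0 ≤ t := (nhd_nonneg hr.le).trans h
  refine ContinuousLinearMap.opNorm_le_bound _ (by positivity) fun v => ?_
  have e : (D.starProjection - F.starProjection) v =
      D.starProjection (Fᗮ.starProjection v) - Dᗮ.starProjection (F.starProjection v) := by
    simp only [sub_apply, Submodule.starProjection_orthogonal_val, map_sub]
    abel
  have h1 : ‖Dᗮ.starProjection (F.starProjection v)‖ ≤ 6 * t * ‖v‖ :=
    (norm_orthogonal_le_of_nhd_le hr hQ hP hq (nhd_comm.trans_le h)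
      (Submodule.starProjection_apply_mem _ _)).trans
      (mul_le_mul_of_nonneg_left (Submodule.norm_starProjection_apply_le _ _) (by positivity))
  have h2 : ‖D.starProjection (Fᗮ.starProjection v)‖ ≤ 6 * t * ‖v‖ := by
    set u := D.starProjection (Fᗮ.starProjection v) with hu
    have hu' : D.starProjection u = u :=
      Submodule.starProjection_eq_self_iff.2 (Submodule.starProjection_apply_mem _ _)
    have e1 : ‖u‖ ^ 2 = inner ℝ v (Fᗮ.starProjection u) := by
      rw [← Submodule.inner_starProjection_left_eq_right, ← real_inner_self_eq_norm_sq]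
      nth_rewrite 1 [hu]
      rw [Submodule.inner_starProjection_left_eq_right, hu']
    have h3 := real_inner_le_norm v (Fᗮ.starProjection u)
    have h4 := norm_orthogonal_le_of_nhd_le hr hP hQ hp h (v := u)
      (Submodule.starProjection_apply_mem _ _)
    have h5 := mul_le_mul_of_nonneg_left h4 (norm_nonneg v)
    by_cases h0 : ‖u‖ = 0
    · rw [h0]; positivity
    have hpos : 0 < ‖u‖ := lt_of_le_of_ne (norm_nonneg u) (Ne.symm h0)
    refine le_of_mul_le_mul_right ?_ hpos
    linarith
  rw [e]
  linarith [norm_sub_le (D.starProjection (Fᗮ.starProjection v))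
    (Dᗮ.starProjection (F.starProjection v))]

end Planes

lemma ten_zpow_neg (k : ℕ) : (10 : ℝ) ^ (-(k : ℤ)) = 10 ^ 4 * scale k := by
  rw [scale, zpow_neg, zpow_natCast, pow_add, one_div, inv_pow]
  field_simp

lemma ten_zpow_one_sub (k : ℕ) : (10 : ℝ) ^ (1 - (k : ℤ)) = 10 ^ 5 * scale k := by
  rw [sub_eq_add_neg, zpow_add₀ (by norm_num), ten_zpow_neg]; norm_num; ring

lemma ten_zpow_two_sub (k : ℕ) : (10 : ℝ) ^ (2 - (k : ℤ)) = 10 ^ 6 * scale k := by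
  rw [sub_eq_add_neg, zpow_add₀ (by norm_num), ten_zpow_neg]; norm_num; ring

lemma ten_zpow_neg_sub_two (k : ℕ) : (10 : ℝ) ^ (-(k : ℤ) - 2) = 100 * scale k := by
  rw [sub_eq_add_neg, zpow_add₀ (by norm_num), ten_zpow_neg]; norm_num; ring

lemma epsK_nonneg {n : ℕ} (E : Set (V n)) (P : V n → ℝ → Set (V n)) (x : V n) (k : ℕ) :
    0 ≤ epsK E P x k :=
  add_nonneg (nhd_nonneg (by positivity)) (Real.iSup_nonneg fun _ => Real.iSup_nonneg fun _ =>
    nhd_nonneg (by positivity))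

section Hypotheses

variable {n : ℕ} {E : Set (V n)} {P : V n → ℝ → Set (V n)} {ε : ℝ}

lemma nhd_neighbour_le
    (hne : ∀ x ∈ E, ∀ k : ℕ, (P x ((10 : ℝ) ^ (-(k : ℤ)))).Nonempty)
    (h9 : ∀ k : ℕ, ∀ x ∈ E, ∀ y ∈ E, dist x y ≤ (10 : ℝ) ^ (2 - (k : ℤ)) →
        nhd x ((10 : ℝ) ^ (2 - (k : ℤ)))
          (P x ((10 : ℝ) ^ (-(k : ℤ)))) (P y ((10 : ℝ) ^ (-(k : ℤ)))) ≤ ε)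
    {x y : V n} (hx : x ∈ E) {k : ℕ} (hy : y ∈ E ∩ ball x ((10 : ℝ) ^ (-(k : ℤ) - 2))) :
    nhd x ((10 : ℝ) ^ (1 - (k : ℤ)))
        (P x ((10 : ℝ) ^ (-(k : ℤ)))) (P y ((10 : ℝ) ^ (-(k : ℤ)))) ≤ 10 * ε := by
  have hr := scale_pos k
  have hd := mem_ball'.1 hy.2
  have h1 := h9 k x hx y hy.1 (by
    rw [ten_zpow_neg_sub_two] at hd
    rw [ten_zpow_two_sub]
    linarith)
  have h2 := nhd_le_of_le (x := x) (r := (10 : ℝ) ^ (1 - (k : ℤ))) (R := (10 : ℝ) ^ (2 - (k : ℤ)))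
    (by positivity) (by rw [ten_zpow_one_sub, ten_zpow_two_sub]; linarith) (hne x hx k)
    (hne y hy.1 k)
  have e : (10 : ℝ) ^ (2 - (k : ℤ)) / (10 : ℝ) ^ (1 - (k : ℤ)) = 10 := by
    rw [ten_zpow_one_sub, ten_zpow_two_sub, div_eq_iff (by positivity)]
    ring
  rw [e] at h2
  linarith

end Hypotheses

/-- The coherence conditions provide the data of the construction. -/
lemma exists_flatData {n d : ℕ} {Λ : ℝ} (hΛ : 1 ≤ Λ)
    (hW : ∀ E : Set (V n), Bornology.IsBounded E → ∀ r > 0, ∃ J θ, IsWeights E r Λ J θ)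
    {ε M : ℝ} (hε : 0 < ε) (hsmall : 10 ^ 17 * Λ ^ 2 * ε ≤ 1) {E : Set (V n)}
    (hE1 : E ⊆ ball (0 : V n) 1) (hE0 : (0 : V n) ∈ E) {P : V n → ℝ → Set (V n)}
    (hP : ∀ x ∈ E, ∀ r : ℝ, 0 < r → r ≤ 10 →
        IsAffinePlane n d (P x r) ∧ x ∈ P x r ∧
        ∀ y ∈ E ∩ ball x r, infDist y (P x r) ≤ ε * r)
    (h8 : ∀ x ∈ E, ∀ k : ℕ,
        nhd x ((10 : ℝ) ^ (-(k : ℤ)))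
          (P x ((10 : ℝ) ^ (-(k : ℤ)))) (P x ((10 : ℝ) ^ (1 - (k : ℤ)))) ≤ ε)
    (h9 : ∀ k : ℕ, ∀ x ∈ E, ∀ y ∈ E, dist x y ≤ (10 : ℝ) ^ (2 - (k : ℤ)) →
        nhd x ((10 : ℝ) ^ (2 - (k : ℤ)))
          (P x ((10 : ℝ) ^ (-(k : ℤ)))) (P y ((10 : ℝ) ^ (-(k : ℤ)))) ≤ ε)
    (hM : ∀ x ∈ E, ∀ N : ℕ, ∑ k ∈ Finset.range N, epsK E P x k ^ 2 ≤ M) :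
    ∃ S : FlatData n, S.E = E ∧ (S.U : Set (V n)) = P 0 10 ∧ S.Λ = Λ ∧
      S.M = 1 + 10 ^ 10 * |M| := by
  have hk10 : ∀ k : ℕ, (10 : ℝ) ^ (-(k : ℤ)) ≤ 10 := fun k => by
    rw [zpow_neg, zpow_natCast]
    exact (inv_le_one_of_one_le₀ (one_le_pow₀ (by norm_num))).trans (by norm_num)
  have hself : ∀ x ∈ E, ∀ k : ℕ, x ∈ P x ((10 : ℝ) ^ (-(k : ℤ))) := fun x hx k =>
    (hP x hx _ (by positivity) (hk10 k)).2.1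
  have hdir : ∀ x, ∀ k : ℕ, ∃ D : Submodule ℝ (V n), x ∈ E →
      ∀ z, z ∈ P x ((10 : ℝ) ^ (-(k : ℤ))) ↔ z - x ∈ D := fun x k => by
    by_cases hx : x ∈ E
    · obtain ⟨D, hD⟩ := (hP x hx _ (by positivity) (hk10 k)).1.exists_direction (hself x hx k)
      exact ⟨D, fun _ => hD⟩
    · exact ⟨⊥, fun h => absurd h hx⟩
  choose D hD using hdir
  obtain ⟨hU0, hU1, hU2⟩ := hP 0 hE0 10 (by norm_num) le_rfl
  obtain ⟨U, hU⟩ := hU0.exists_direction hU1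
  choose J θ hJ using fun k => hW E (isBounded_ball.subset hE1) (scale k) (scale_pos k)
  have hnb : ∀ {x y : V n}, x ∈ E → ∀ {k : ℕ}, y ∈ E ∩ ball x ((10 : ℝ) ^ (-(k : ℤ) - 2)) →
      nhd x ((10 : ℝ) ^ (1 - (k : ℤ)))
        (P x ((10 : ℝ) ^ (-(k : ℤ)))) (P y ((10 : ℝ) ^ (-(k : ℤ)))) ≤ 10 * ε :=
    fun hx _ hy => nhd_neighbour_le (fun x hx k => ⟨x, hself x hx k⟩) h9 hx hy
  have heps : ∀ x ∈ E, ∀ k, epsK E P x k ≤ 11 * ε := fun x hx k => by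
    have := biSup_le_of_le (by positivity : 0 ≤ 10 * ε) fun y hy => hnb hx (k := k) (y := y) hy
    have := h8 x hx k
    unfold epsK
    linarith
  have hnear : ∀ k, ∀ p ∈ E, ∀ x ∈ E, ‖x - p‖ < 100 * scale k →
      nhd p ((10 : ℝ) ^ (1 - (k : ℤ))) (P p ((10 : ℝ) ^ (-(k : ℤ))))
        (P x ((10 : ℝ) ^ (-(k : ℤ)))) ≤ epsK E P p k := fun k p hp x hx h => by
    have h1 := le_biSup_of_le (fun y hy => hnb hp (k := k) (y := y) hy)
      (i := x) ⟨hx, by rw [ten_zpow_neg_sub_two]; exact mem_ball_iff_norm.2 h⟩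
    have h2 : 0 ≤ nhd p ((10 : ℝ) ^ (-(k : ℤ))) (P p ((10 : ℝ) ^ (-(k : ℤ))))
      (P p ((10 : ℝ) ^ (1 - (k : ℤ)))) := nhd_nonneg (by positivity)
    unfold epsK
    linarith
  set η := 10 ^ 7 * ε with hη
  have hη0 : 0 ≤ η := by positivity
  set a : ℕ → V n → ℝ := fun k p => if k = 0 then η else 10 ^ 5 * epsK E P p k with ha
  have ha_ge : ∀ k, ∀ p ∈ E, 10 ^ 5 * epsK E P p k ≤ a k p := fun k p hp => by
    by_cases hk : k = 0
    · simp only [ha, hk, if_true, hη]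
      linarith [heps p hp 0]
    · simp only [ha, hk, if_false, le_refl]
  have hη1 : η ≤ 1 := by
    have : 1 ≤ Λ ^ 2 := one_le_pow₀ hΛ
    have := mul_le_mul_of_nonneg_right this hε.le
    linarith
  have hproj0 : ∀ p ∈ E, ‖(D p 0).starProjection - U.starProjection‖ ≤ η := fun p hp => by
    have hp1 : ‖p‖ < 1 := mem_ball_zero_iff.1 (hE1 hp)
    have h1 := h9 0 p hp 0 hE0 (by rw [dist_zero_right]; norm_num; linarith)
    have h2 := norm_starProjection_sub_le (by positivity) (hD p 0 hp) (hD 0 0 hE0)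
      (by norm_num) (by rw [zero_sub, norm_neg]; norm_num; linarith) h1
    have h3 := h8 0 hE0 0
    have e : (10 : ℝ) ^ (1 - ((0 : ℕ) : ℤ)) = 10 := by norm_num
    rw [e] at h3
    have h4 := norm_starProjection_sub_le (by positivity) (hD 0 0 hE0) hU
      (by norm_num) (by norm_num) h3
    have h5 := norm_sub_le_norm_sub_add_norm_sub (D p 0).starProjection
      (D 0 0).starProjection U.starProjection
    linarith
  have hM0 : 0 ≤ M := by simpa using hM 0 hE0 0
  refine ⟨{ E := E, D := D, U := U, a := a, Λ := Λ, η := η, M := 1 + 10 ^ 10 * |M|, J := J,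
            θ := θ, weights := hJ, one_le := hΛ, eta_nonneg := hη0, M_nonneg := by positivity,
            small := ?_, a_nonneg := ?_, a_le := ?_, sum_a := ?_, near_proj := ?_,
            near_dist := ?_, next_proj := ?_, init_proj := ?_, init_dist := ?_ },
    rfl, ?_, rfl, rfl⟩
  · linarith
  · intro k p
    by_cases hk : k = 0
    · simpa only [ha, hk, if_true] using hη0
    · simpa only [ha, hk, if_false] using mul_nonneg (by norm_num) (epsK_nonneg E P p k)
  · intro k p hp
    by_cases hk : k = 0
    · simp only [ha, hk, if_true, le_refl]
    · simp only [ha, hk, if_false, hη]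
      linarith [heps p hp k]
  · intro p hp N
    have h1 : ∀ k, a k p ^ 2 ≤ (if k = 0 then 1 else 0) + 10 ^ 10 * epsK E P p k ^ 2 :=
      fun k => by
        by_cases hk : k = 0
        · simp only [ha, hk, if_true]
          have := sq_nonneg (epsK E P p 0)
          nlinarith
        · simp only [ha, hk, if_false]
          linarith
    have h2 : ∑ k ∈ Finset.range N, (if k = 0 then (1 : ℝ) else 0) ≤ 1 := by
      rw [Finset.sum_ite_eq']
      split_ifs <;> norm_num
    calc ∑ k ∈ Finset.range N, a k p ^ 2
        ≤ ∑ k ∈ Finset.range N, ((if k = 0 then 1 else 0) + 10 ^ 10 * epsK E P p k ^ 2) :=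
          Finset.sum_le_sum fun k _ => h1 k
      _ ≤ 1 + 10 ^ 10 * |M| := by
          rw [Finset.sum_add_distrib, ← Finset.mul_sum]
          linarith [hM p hp N, le_abs_self M]
  · intro k p hp x hx h
    have hr := scale_pos k
    have h1 := norm_starProjection_sub_le (by positivity) (hD p k hp) (hD x k hx)
      (by rw [sub_self, norm_zero]; positivity)
      (by rw [ten_zpow_one_sub]; linarith) (hnear k p hp x hx h)
    rw [norm_sub_rev]
    linarith [ha_ge k p hp, epsK_nonneg E P p k]
  · intro k p hp x hx h
    have hr := scale_pos k
    have h1 := infDist_le_of_nhd_le (by positivity) ⟨p, hself p hp k⟩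
      (nhd_comm.trans_le (hnear k p hp x hx h)) (hself x hx k)
      (by rw [ten_zpow_one_sub]; linarith)
    rw [ten_zpow_one_sub] at h1
    refine (norm_orthogonal_le_infDist (hD p k hp) x).trans (h1.trans ?_)
    linarith [mul_le_mul_of_nonneg_right (ha_ge k p hp) hr.le]
  · intro k p hp
    have h0 : nhd p ((10 : ℝ) ^ (-((k + 1 : ℕ) : ℤ))) (P p ((10 : ℝ) ^ (-((k + 1 : ℕ) : ℤ))))
        (P p ((10 : ℝ) ^ (-(k : ℤ)))) ≤ epsK E P p (k + 1) := by
      have e : (1 : ℤ) - ((k + 1 : ℕ) : ℤ) = -(k : ℤ) := by push_cast; ring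
      unfold epsK
      rw [e]
      exact le_add_of_nonneg_right (Real.iSup_nonneg fun _ => Real.iSup_nonneg fun _ =>
        nhd_nonneg (by positivity))
    have h1 := norm_starProjection_sub_le (by positivity) (hD p (k + 1) hp) (hD p k hp)
      (by rw [sub_self, norm_zero]; positivity) (by rw [sub_self, norm_zero]; positivity) h0
    linarith [ha_ge (k + 1) p hp, epsK_nonneg E P p (k + 1)]
  · intro p hp
    simpa only [ha, if_true] using hproj0 p hp
  · intro p hp
    have hp1 : ‖p‖ < 1 := mem_ball_zero_iff.1 (hE1 hp)
    have h1 := norm_orthogonal_le_infDist hU p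
    have h2 := hU2 p ⟨hp, mem_ball_zero_iff.2 (by linarith)⟩
    rw [sub_zero] at h1
    have hs : scale 0 = 1 / 10000 := by norm_num [scale]
    simp only [ha, if_true, hη, hs]
    linarith
  · ext z
    rw [hU z, sub_zero]
    rfl

/-- **Theorem 1.21**: under the hypotheses of Theorem 1.10, if
`J(x) = Σ_k ε_k(x)² ≤ M` on `E`, the map `g` is bi-Lipschitz with a constant
depending only on `n`, `d`, `M`. -/
theorem thm_1_21 (n d : ℕ) (hd : 0 < d) (hdn : d < n) :
    ∃ ε : ℝ, 0 < ε ∧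
    ∀ M : ℝ, ∃ C : ℝ, 1 ≤ C ∧
      ∀ E : Set (V n), IsClosed E → E ⊆ ball (0 : V n) 1 → (0 : V n) ∈ E →
      ∀ P : V n → ℝ → Set (V n),
      (∀ x ∈ E, ∀ r : ℝ, 0 < r → r ≤ 10 →
        IsAffinePlane n d (P x r) ∧ x ∈ P x r ∧
        ∀ y ∈ E ∩ ball x r, infDist y (P x r) ≤ ε * r) →
      -- coherence condition (1.8)
      (∀ x ∈ E, ∀ k : ℕ,
        nhd x ((10 : ℝ) ^ (-(k : ℤ)))
          (P x ((10 : ℝ) ^ (-(k : ℤ)))) (P x ((10 : ℝ) ^ (1 - (k : ℤ)))) ≤ ε) →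
      -- coherence condition (1.9)
      (∀ k : ℕ, ∀ x ∈ E, ∀ y ∈ E, dist x y ≤ (10 : ℝ) ^ (2 - (k : ℤ)) →
        nhd x ((10 : ℝ) ^ (2 - (k : ℤ)))
          (P x ((10 : ℝ) ^ (-(k : ℤ)))) (P y ((10 : ℝ) ^ (-(k : ℤ)))) ≤ ε) →
      -- `J(x) ≤ M` on `E`
      (∀ x ∈ E, ∀ N : ℕ, ∑ k ∈ Finset.range N, epsK E P x k ^ 2 ≤ M) →
      ∃ g : V n → V n, Function.Bijective g ∧
        E ⊆ g '' (P 0 10) ∧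
        ∀ x y : V n,
          C⁻¹ * dist x y ≤ dist (g x) (g y) ∧ dist (g x) (g y) ≤ C * dist x y := by
  obtain ⟨Λ, hΛ, hW⟩ := exists_isWeights n
  have hΛ2 : 0 < Λ ^ 2 := by positivity
  refine ⟨1 / (10 ^ 17 * Λ ^ 2), by positivity, fun M =>
    ⟨16 * Real.exp (5 * (144000000 * Λ ^ 4 * (1 + 10 ^ 10 * |M|))), ?_, ?_⟩⟩
  · have := Real.one_le_exp (x := 5 * (144000000 * Λ ^ 4 * (1 + 10 ^ 10 * |M|)))
      (by positivity)
    linarith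
  intro E _ hE1 hE0 P hP h8 h9 hM
  obtain ⟨S, hSE, hSU, hSΛ, hSM⟩ := exists_flatData hΛ hW (by positivity)
    (by rw [mul_one_div_cancel (by positivity)]) hE1 hE0 hP h8 h9 hM
  obtain ⟨g, hbij, hsub, hg⟩ := S.exists_biLipschitz
  rw [FlatData.κ, hSΛ, hSM] at hg
  refine ⟨g, hbij, ?_, fun x y => ?_⟩
  · rwa [hSE, hSU] at hsub
  · rw [dist_eq_norm, dist_eq_norm, inv_mul_le_iff₀ (by positivity)]
    exact hg x y
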